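/- arXiv:2403.16589 — 2 statements merged into one kernel-verified Lean document; each statement's English description precedes it below -/
import Mathlib

section
/- There exist a constant c > 0 and n₀ such that for all n ≥ n₀ and every nonzero vector v ∈ F₂ⁿ of even Hamming weight, the number of independent sets in the graph Qₙ ∪ Γ_{F₂ⁿ}(v) (the graph on vertex set F₂ⁿ in which x and y are adjacent iff x+y has Hamming weight 1 or x+y = v) is at most 2^(2^(n−1) − 2^(n/2 − c·√n)). -/
/-- `V n` is the vector space `F₂ⁿ`. -/
abbrev V (n : ℕ) : Type := Fin n → ZMod 2

/-- The graph `Qₙ ∪ Γ_{F₂ⁿ}(v)`: `x` and `y` are adjacent iff `x + y` has Hamming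
weight `1` or `x + y = v` (with `x ≠ y`). -/
def QCay (n : ℕ) (v : V n) : SimpleGraph (V n) :=
  SimpleGraph.fromRel (fun x y => hammingDist x y = 1 ∨ x + y = v)


section abs
variable {α : Type*} [Fintype α] [DecidableEq α]

/-- number of subsets of size at most k -/
def MM (α : Type*) [Fintype α] [DecidableEq α] (k : ℕ) : ℕ :=
  ((Finset.univ : Finset (Finset α)).filter (fun S => S.card ≤ k)).card

theorem MM_le (k : ℕ) (x : ℝ) (hx : 0 < x) (hx1 : x ≤ 1) :
    (MM α k : ℝ) * x ^ k ≤ Real.exp (x * Fintype.card α) := by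
  have h1 : ∑ S : Finset α, x ^ S.card * 1 ^ (Fintype.card α - S.card) = (x + 1) ^ Fintype.card α :=
    Fintype.sum_pow_mul_eq_add_pow α x 1
  have h2 : (x + 1) ^ Fintype.card α ≤ Real.exp (x * Fintype.card α) := by
    rw [mul_comm, Real.exp_nat_mul]
    exact pow_le_pow_left₀ (by linarith) (Real.add_one_le_exp x) _
  refine le_trans ?_ h2
  rw [← h1, MM]
  rw [← nsmul_eq_mul]
  rw [← Finset.sum_const]
  refine le_trans (Finset.sum_le_sum (g := fun S : Finset α => x ^ S.card * 1 ^ (Fintype.card α - S.card)) ?_) 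
    (Finset.sum_le_sum_of_subset_of_nonneg (Finset.subset_univ _) ?_)
  · intro S hS
    simp only [one_pow, mul_one]
    exact pow_le_pow_of_le_one hx.le hx1 (by simpa using hS)
  · intros; positivity

theorem matching_count (σ : α → α) (hσ : ∀ u, σ (σ u) = u) (hf : ∀ u, σ u ≠ u) :
    (((Finset.univ : Finset (Finset α)).filter (fun A => ∀ u ∈ A, σ u ∉ A)).card) ^ 2
      ≤ 3 ^ Fintype.card α := by
  have e := Fintype.equivFin α
  set R : Finset α := Finset.univ.filter (fun u => e u < e (σ u)) with hR
  have hRc : 2 * R.card = Fintype.card α := by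
    have h1 : (Finset.univ.filter (fun u => ¬ e u < e (σ u))).card = R.card := by
      symm
      apply Finset.card_bij (fun u _ => σ u)
      · intro a ha
        simp only [hR, Finset.mem_filter, Finset.mem_univ, true_and] at ha ⊢
        rw [hσ]; exact ha.asymm
      · intro a _ b _ h
        rw [← hσ a, h, hσ]
      · intro b hb
        simp only [Finset.mem_filter, Finset.mem_univ, true_and, not_lt] at hb
        refine ⟨σ b, ?_, hσ b⟩
        simp only [hR, Finset.mem_filter, Finset.mem_univ, true_and, hσ]
        exact lt_of_le_of_ne hb (fun h => hf b (e.injective h))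
    have h2 := Finset.card_filter_add_card_filter_not (s := (Finset.univ : Finset α)) (fun u => e u < e (σ u))
    rw [Finset.card_univ] at h2
    rw [← hR] at h2
    omega
  have hc : ((Finset.univ : Finset (Finset α)).filter (fun A => ∀ u ∈ A, σ u ∉ A)).card
      ≤ Fintype.card (R → Fin 3) := by
    rw [← Finset.card_univ]
    apply Finset.card_le_card_of_injOn 
      (fun (A : Finset α) (u : R) => if (u : α) ∈ A then (0 : Fin 3) else if σ u ∈ A then 1 else 2)
    · intro A _; simp
    · intro A hA B hB h
      simp only [Finset.coe_filter, Finset.mem_univ, true_and, Set.mem_setOf_eq] at hA hB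
      have key : ∀ u ∈ R, (u ∈ A ↔ u ∈ B) ∧ (σ u ∈ A ↔ σ u ∈ B) := by
        intro u hu
        have := congrFun h ⟨u, hu⟩
        simp only at this
        have a1 := hA u
        have b1 := hB u
        by_cases c1 : u ∈ A <;> by_cases c2 : σ u ∈ A <;> by_cases c3 : u ∈ B <;> by_cases c4 : σ u ∈ B <;> simp_all
      ext u
      by_cases hu : e u < e (σ u)
      · exact (key u (by simp [hR, hu])).1
      · have := (key (σ u) (by simp only [hR, Finset.mem_filter, Finset.mem_univ, true_and, hσ]; exact lt_of_le_of_ne (not_lt.1 hu) (fun h => hf u (e.injective h)))).2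
        rwa [hσ] at this
  calc _ ≤ (Fintype.card (R → Fin 3)) ^ 2 := Nat.pow_le_pow_left hc 2
    _ = 3 ^ Fintype.card α := by
      rw [Fintype.card_fun, ← hRc, Fintype.card_coe, Fintype.card_fin, ← pow_mul, mul_comm]

variable (nb : α → Finset α)

/-- greedy -/
theorem greedy (A : Finset α) (ψ : ℕ) (hψ : 0 < ψ) :
    ∃ T ⊆ A, ψ * T.card ≤ Fintype.card α ∧ ∀ x ∈ A, (nb x \ T.biUnion nb).card < ψ := by
  have hex : ∃ T ∈ A.powerset.filter (fun T => ψ * T.card ≤ (T.biUnion nb).card), 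
      ∀ T' ∈ A.powerset.filter (fun T => ψ * T.card ≤ (T.biUnion nb).card), T'.card ≤ T.card := by
    apply Finset.exists_max_image
    exact ⟨∅, by simp⟩
  obtain ⟨T, hT, hmax⟩ := hex
  simp only [Finset.mem_filter, Finset.mem_powerset] at hT hmax
  refine ⟨T, hT.1, hT.2.trans (Finset.card_le_univ _), ?_⟩
  intro x hx
  by_contra hcon
  push Not at hcon
  have hxT : x ∉ T := by
    intro hxT
    have : nb x \ T.biUnion nb = ∅ := by
      rw [Finset.sdiff_eq_empty_iff_subset]
      exact Finset.subset_biUnion_of_mem nb hxT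
    rw [this] at hcon
    simp at hcon; omega
  have := hmax (insert x T) ⟨Finset.insert_subset hx hT.1, by
    rw [Finset.card_insert_of_notMem hxT, Finset.biUnion_insert]
    have : (nb x ∪ T.biUnion nb).card = (nb x \ T.biUnion nb).card + (T.biUnion nb).card := 
      (Finset.card_sdiff_add_card _ _).symm
    rw [this, mul_add]; omega⟩
  rw [Finset.card_insert_of_notMem hxT] at this
  omega

theorem edge_symm (hs : ∀ x y, y ∈ nb x ↔ x ∈ nb y) (S T : Finset α) :
    ∑ x ∈ S, (nb x ∩ T).card = ∑ y ∈ T, (nb y ∩ S).card := by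
  have := Finset.sum_card_bipartiteAbove_eq_sum_card_bipartiteBelow (s := S) (t := T) (fun x y => y ∈ nb x)
  convert this using 2 with x hx y hy
  · congr 1; ext y; simp [Finset.bipartiteAbove, and_comm]
  · congr 1; ext z; simp [Finset.bipartiteBelow, and_comm, hs]

/-- F : common non-neighbours -/
def NN (A : Finset α) : Finset α := Finset.univ.filter (fun y => Disjoint (nb y) A)

theorem NN_anti {A B : Finset α} (h : A ⊆ B) : NN nb B ⊆ NN nb A := by
  intro y hy
  simp only [NN, Finset.mem_filter, Finset.mem_univ, true_and] at hy ⊢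
  exact hy.mono_right h

theorem sub_NN (hs : ∀ x y, y ∈ nb x ↔ x ∈ nb y) {A B : Finset α} : A ⊆ NN nb B ↔ B ⊆ NN nb A := by
  simp only [NN, Finset.subset_iff, Finset.mem_filter, Finset.mem_univ, true_and, Finset.disjoint_left]
  grind

theorem NN3 (hs : ∀ x y, y ∈ nb x ↔ x ∈ nb y) (A : Finset α) : NN nb (NN nb (NN nb A)) = NN nb A := by
  apply Finset.Subset.antisymm
  · exact NN_anti nb ((sub_NN nb hs).1 subset_rfl)
  · exact (sub_NN nb hs).1 subset_rfl

/-- t counted: one-sided estimate. -/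
theorem side (hs : ∀ x y, y ∈ nb x ↔ x ∈ nb y) (n : ℕ) (hn : ∀ x, (nb x).card = n)
    (A F : Finset α) (hAF : A = NN nb F) (t : ℕ)
    (ht : A.card + F.card + t = Fintype.card α) (ψ : ℕ) (hψ : 2 * ψ ≤ n)
    (T : Finset α) (hT : T ⊆ A)
    (D : Finset α) (hD : ∀ x ∈ D, (nb x \ T.biUnion nb).card < ψ) :
    (D \ A).card ≤ 2 * t := by
  rcases Nat.eq_zero_or_pos n with h0 | hpos
  · have : D = ∅ := by
      apply Finset.eq_empty_of_forall_notMem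
      intro x hx
      have := hD x hx; omega
    simp [this]
  -- edges from Aᶜ to Fᶜ
  have e1 : ∑ x ∈ Aᶜ, (nb x ∩ Fᶜ).card = ∑ y ∈ Fᶜ, (nb y ∩ Aᶜ).card := edge_symm nb hs _ _
  have e2 : ∑ x ∈ A, (nb x ∩ Fᶜ).card = ∑ y ∈ Fᶜ, (nb y ∩ A).card := edge_symm nb hs _ _
  have e3 : ∑ x ∈ A, (nb x ∩ Fᶜ).card = n * A.card := by
    rw [Finset.sum_congr rfl (g := fun _ => n), Finset.sum_const, smul_eq_mul, mul_comm]
    intro x hx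
    rw [← hn x]; congr 1
    rw [Finset.inter_eq_left, Finset.subset_compl_iff_disjoint_right]
    rw [hAF] at hx
    simpa [NN] using hx
  have e4 : ∑ y ∈ Fᶜ, (nb y ∩ Aᶜ).card + ∑ y ∈ Fᶜ, (nb y ∩ A).card = n * Fᶜ.card := by
    rw [← Finset.sum_add_distrib, Finset.sum_congr rfl (g := fun _ => n), Finset.sum_const, smul_eq_mul, mul_comm]
    intro x hx
    rw [← hn x, ← Finset.card_inter_add_card_sdiff (nb x) A, add_comm, Finset.sdiff_eq_inter_compl]
  have hFc : Fᶜ.card = A.card + t := by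
    rw [Finset.card_compl]; omega
  have e5 : ∑ x ∈ Aᶜ, (nb x ∩ Fᶜ).card = n * t := by
    rw [hFc, mul_add] at e4; omega
  have e6 : (D \ A).card * (n - ψ) ≤ ∑ x ∈ Aᶜ, (nb x ∩ Fᶜ).card := by
    calc (D \ A).card * (n - ψ) = ∑ x ∈ D \ A, (n - ψ) := by simp
      _ ≤ ∑ x ∈ D \ A, (nb x ∩ Fᶜ).card := by
        apply Finset.sum_le_sum
        intro x hx
        have h1 := hD x (Finset.mem_sdiff.1 hx).1
        have h2 : nb x ⊆ (nb x \ T.biUnion nb) ∪ (nb x ∩ Fᶜ) := by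
          intro y hy
          by_cases hyT : y ∈ T.biUnion nb
          · apply Finset.mem_union_right
            simp only [Finset.mem_inter, hy, true_and, Finset.mem_compl]
            intro hyF
            obtain ⟨u, hu, hyu⟩ := Finset.mem_biUnion.1 hyT
            have := hT hu
            rw [hAF] at this
            simp only [NN, Finset.mem_filter, Finset.mem_univ, true_and] at this
            exact Finset.disjoint_left.1 this hyu hyF
          · exact Finset.mem_union_left _ (by simp [hy, hyT])
        have h3 := (Finset.card_le_card h2).trans (Finset.card_union_le _ _)
        rw [hn] at h3; omega
      _ ≤ _ := by
        apply Finset.sum_le_sum_of_subset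
        intro x hx
        simp at hx ⊢; exact hx.2
  rw [e5] at e6
  have h7 : (D \ A).card * n ≤ (D \ A).card * (2 * (n - ψ)) := Nat.mul_le_mul_left _ (by omega)
  have : n * (D \ A).card ≤ n * (2 * t) := by nlinarith
  exact Nat.le_of_mul_le_mul_left this hpos

/-- the two containers -/
def DD (T T' : Finset α) (ψ : ℕ) : Finset α :=
  Finset.univ.filter (fun x => x ∉ T'.biUnion nb ∧ (nb x \ T.biUnion nb).card < ψ)

theorem sub_DD (hs : ∀ x y, y ∈ nb x ↔ x ∈ nb y) (A F T T' : Finset α) (hAF : A = NN nb F)  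
    (hT' : T' ⊆ F) (ψ : ℕ) (h : ∀ x ∈ A, (nb x \ T.biUnion nb).card < ψ) : A ⊆ DD nb T T' ψ := by
  intro x hx
  have h2 := h x hx
  rw [hAF] at hx
  simp only [NN, DD, Finset.mem_filter, Finset.mem_univ, true_and, Finset.mem_biUnion] at hx ⊢
  refine ⟨?_, h2⟩
  rintro ⟨u, hu, hxu⟩
  exact Finset.disjoint_left.1 hx ((hs _ _).1 hxu) (hT' hu)

theorem DD_size (hs : ∀ x y, y ∈ nb x ↔ x ∈ nb y) (n : ℕ) (hn : ∀ x, (nb x).card = n)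
    (A F : Finset α) (hAF : A = NN nb F) (hFA : F = NN nb A) (t : ℕ)
    (ht : A.card + F.card + t = Fintype.card α) (ψ : ℕ) (hψ : 2 * ψ ≤ n)
    (T T' : Finset α) (hT : T ⊆ A) (hT' : T' ⊆ F) :
    n * ((DD nb T T' ψ).card + (DD nb T' T ψ).card) ≤ n * Fintype.card α + 4 * ψ * t := by
  set D := DD nb T T' ψ with hD
  set E := DD nb T' T ψ with hE
  have hD1 : ∀ x ∈ D, (nb x \ T.biUnion nb).card < ψ := by
    intro x hx; rw [hD] at hx; simp only [DD, Finset.mem_filter] at hx; exact hx.2.2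
  have hE1 : ∀ x ∈ E, (nb x \ T'.biUnion nb).card < ψ := by
    intro x hx; rw [hE] at hx; simp only [DD, Finset.mem_filter] at hx; exact hx.2.2
  have hD2 : ∀ x ∈ D, (nb x ∩ E).card ≤ ψ := by
    intro x hx
    refine le_trans (Finset.card_le_card ?_) (hD1 x hx).le
    intro y hy
    rw [hE] at hy
    simp only [DD, Finset.mem_filter, Finset.mem_univ, true_and, Finset.mem_inter] at hy
    simp only [Finset.mem_sdiff]
    exact ⟨hy.1, hy.2.1⟩
  have hE2 : ∀ x ∈ E, (nb x ∩ D).card ≤ ψ := by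
    intro x hx
    refine le_trans (Finset.card_le_card ?_) (hE1 x hx).le
    intro y hy
    rw [hD] at hy
    simp only [DD, Finset.mem_filter, Finset.mem_univ, true_and, Finset.mem_inter] at hy
    simp only [Finset.mem_sdiff]
    exact ⟨hy.1, hy.2.1⟩
  have s1 := side nb hs n hn A F hAF t ht ψ hψ T hT D hD1
  have s2 := side nb hs n hn F A hFA t (by omega) ψ hψ T' hT' E hE1
  have e1 : ∑ x ∈ D, (nb x ∩ E).card ≤ ψ * (D \ A).card + ψ * (E \ F).card := by
    have a1 : ∑ x ∈ D, (nb x ∩ E).card ≤ ∑ x ∈ D \ A, (nb x ∩ E).card + ∑ x ∈ D ∩ A, (nb x ∩ E).card := by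
      rw [← Finset.sum_union (Finset.disjoint_sdiff_inter D A), Finset.sdiff_union_inter]
    have a2 : ∑ x ∈ D \ A, (nb x ∩ E).card ≤ ψ * (D \ A).card := by
      rw [mul_comm, ← smul_eq_mul]
      exact Finset.sum_le_card_nsmul _ _ _ (fun x hx => hD2 x (Finset.mem_sdiff.1 hx).1)
    have a3 : ∑ x ∈ D ∩ A, (nb x ∩ E).card ≤ ∑ x ∈ D ∩ A, (nb x ∩ (E \ F)).card := by
      apply Finset.sum_le_sum
      intro x hx
      apply Finset.card_le_card
      intro y hy
      have hxA := (Finset.mem_inter.1 hx).2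
      rw [hAF] at hxA
      simp only [NN, Finset.mem_filter, Finset.mem_univ, true_and] at hxA
      have := Finset.mem_inter.1 hy
      simp only [Finset.mem_inter, Finset.mem_sdiff]
      exact ⟨this.1, this.2, Finset.disjoint_left.1 hxA this.1⟩
    have a4 : ∑ x ∈ D ∩ A, (nb x ∩ (E \ F)).card ≤ ψ * (E \ F).card := by
      rw [edge_symm nb hs, mul_comm, ← smul_eq_mul]
      apply Finset.sum_le_card_nsmul
      intro x hx
      refine le_trans (Finset.card_le_card ?_) (hE2 x (Finset.mem_sdiff.1 hx).1)
      exact Finset.inter_subset_inter_left Finset.inter_subset_left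
    omega
  have e2 : ∑ x ∈ D, (nb x ∩ Eᶜ).card + ∑ x ∈ D, (nb x ∩ E).card = n * D.card := by
    rw [← Finset.sum_add_distrib, Finset.sum_congr rfl (g := fun _ => n), Finset.sum_const, smul_eq_mul, mul_comm]
    intro x hx
    rw [← hn x, ← Finset.card_inter_add_card_sdiff (nb x) E, add_comm, Finset.sdiff_eq_inter_compl]
  have e3 : ∑ x ∈ D, (nb x ∩ Eᶜ).card ≤ n * Eᶜ.card := by
    rw [edge_symm nb hs, mul_comm, ← smul_eq_mul]
    apply Finset.sum_le_card_nsmul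
    intro x hx
    rw [← hn x]
    exact Finset.card_le_card Finset.inter_subset_left
  have e4 : Eᶜ.card + E.card = Fintype.card α := Finset.card_compl_add_card E
  have e5 : ψ * (D \ A).card ≤ ψ * (2 * t) := Nat.mul_le_mul_left _ s1
  have e6 : ψ * (E \ F).card ≤ ψ * (2 * t) := Nat.mul_le_mul_left _ s2
  rw [← e4]
  nlinarith

/-- pairs compatible with the containers -/
def PP (t j ψ : ℕ) (T T' : Finset α) : Finset (Finset α × Finset α) :=
  Finset.univ.filter (fun p => p.2 ⊆ NN nb p.1 ∧
    (NN nb (NN nb p.1)).card + (NN nb p.1).card + t = Fintype.card α ∧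
    NN nb (NN nb p.1) ⊆ DD nb T T' ψ ∧ NN nb p.1 ⊆ DD nb T' T ψ ∧
    (DD nb T T' ψ).card + (DD nb T' T ψ).card ≤ Fintype.card α + j)

theorem PP_card (hs : ∀ x y, y ∈ nb x ↔ x ∈ nb y) (t j ψ : ℕ) (T T' : Finset α) :
    (PP nb t j ψ T T').card ≤ 2 ^ (Fintype.card α - j) + 2 ^ (Fintype.card α - t) * MM α (2 * j) := by
  set D := DD nb T T' ψ with hD
  set E := DD nb T' T ψ with hE
  have hcl : ∀ A, A ⊆ NN nb (NN nb A) := fun A => (sub_NN nb hs).1 subset_rfl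
  have hmem : ∀ p ∈ PP nb t j ψ T T', p.2 ⊆ NN nb p.1 ∧
    (NN nb (NN nb p.1)).card + (NN nb p.1).card + t = Fintype.card α ∧
    NN nb (NN nb p.1) ⊆ D ∧ NN nb p.1 ⊆ E ∧
    D.card + E.card ≤ Fintype.card α + j := by
    intro p hp
    simpa only [PP, Finset.mem_filter, Finset.mem_univ, true_and] using hp
  rw [← Finset.card_filter_add_card_filter_not (s := PP nb t j ψ T T') (fun p => (NN nb p.1).card + 2 * j ≤ E.card)]
  apply Nat.add_le_add
  · by_cases hEj : ((PP nb t j ψ T T').filter (fun p => (NN nb p.1).card + 2 * j ≤ E.card)).Nonempty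
    · have h1 : ((PP nb t j ψ T T').filter (fun p => (NN nb p.1).card + 2 * j ≤ E.card)).card ≤ 
          2 ^ (E.card - 2 * j) * D.powerset.card := by
        apply Finset.card_le_mul_card_image_of_maps_to (f := Prod.fst)
        · intro p hp
          rw [Finset.mem_powerset]
          exact (hcl _).trans (hmem p (Finset.mem_filter.1 hp).1).2.2.1
        · intro A hA
          by_cases hc : (NN nb A).card + 2 * j ≤ E.card
          · calc _ ≤ (NN nb A).powerset.card := by
                  apply Finset.card_le_card_of_injOn Prod.snd
                  · intro p hp
                    simp only [Finset.coe_filter, Set.mem_setOf_eq, Finset.mem_filter] at hp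
                    simp only [Finset.coe_powerset, Set.mem_preimage, Set.mem_powerset_iff, Finset.coe_subset]
                    rw [← hp.2]
                    exact (hmem p hp.1.1).1
                  · intro p hp q hq h
                    simp only [Finset.coe_filter, Set.mem_setOf_eq, Finset.mem_filter] at hp hq
                    exact Prod.ext (hp.2.trans hq.2.symm) h
              _ ≤ _ := by
                  rw [Finset.card_powerset]
                  exact Nat.pow_le_pow_right (by norm_num) (by omega)
          · convert Nat.zero_le _
            rw [Finset.card_eq_zero]
            apply Finset.eq_empty_of_forall_notMem
            intro p hp
            simp only [Finset.mem_filter] at hp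
            rw [hp.2] at hp
            exact hc hp.1.2
      refine h1.trans ?_
      obtain ⟨p, hp⟩ := hEj
      simp only [Finset.mem_filter] at hp
      have := hmem p hp.1
      rw [Finset.card_powerset, ← pow_add]
      exact Nat.pow_le_pow_right (by norm_num) (by omega)
    · rw [Finset.not_nonempty_iff_eq_empty.1 hEj]; simp
  · apply Finset.card_le_mul_card_image_of_maps_to (f := fun p => E \ NN nb p.1)
    · intro p hp
      have hp' := Finset.mem_filter.1 hp
      have := hmem p hp'.1
      simp only [Finset.mem_filter, Finset.mem_univ, true_and]
      rw [Finset.card_sdiff_of_subset this.2.2.2.1]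
      have := hp'.2
      omega
    · intro R hR
      set F := E \ R with hF
      have hFp : ∀ p ∈ ((PP nb t j ψ T T').filter (fun p => ¬ (NN nb p.1).card + 2 * j ≤ E.card)).filter 
          (fun p => E \ NN nb p.1 = R), NN nb p.1 = F := by
        intro p hp
        simp only [Finset.mem_filter] at hp
        rw [hF, ← hp.2, Finset.sdiff_sdiff_eq_self (hmem p hp.1.1).2.2.2.1]
      by_cases hne : (((PP nb t j ψ T T').filter (fun p => ¬ (NN nb p.1).card + 2 * j ≤ E.card)).filter 
          (fun p => E \ NN nb p.1 = R)).Nonempty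
      · calc _ ≤ ((NN nb F).powerset ×ˢ F.powerset).card := by
                apply Finset.card_le_card
                intro p hp
                have h1 := hFp p hp
                simp only [Finset.mem_filter] at hp
                have h2 := hmem p hp.1.1
                rw [Finset.mem_product, Finset.mem_powerset, Finset.mem_powerset, ← h1]
                exact ⟨hcl _, h2.1⟩
          _ ≤ _ := by
                obtain ⟨p, hp⟩ := hne
                have h1 := hFp p hp
                simp only [Finset.mem_filter] at hp
                have h2 := hmem p hp.1.1
                rw [h1] at h2
                rw [Finset.card_product, Finset.card_powerset, Finset.card_powerset, ← pow_add]
                exact Nat.pow_le_pow_right (by norm_num) (by omega)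
      · rw [Finset.not_nonempty_iff_eq_empty.1 hne]; simp

/-- all pairs with given t -/
def PT (t : ℕ) : Finset (Finset α × Finset α) :=
  Finset.univ.filter (fun p => p.2 ⊆ NN nb p.1 ∧
    (NN nb (NN nb p.1)).card + (NN nb p.1).card + t = Fintype.card α)

theorem PT_card (hs : ∀ x y, y ∈ nb x ↔ x ∈ nb y) (n : ℕ) (hn : ∀ x, (nb x).card = n) (hn0 : 0 < n)
    (t j ψ : ℕ) (hψ0 : 0 < ψ) (hψ : 2 * ψ ≤ n) (hj : 4 * ψ * t ≤ n * j) :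
    (PT nb t).card ≤ (MM α (Fintype.card α / ψ) * MM α (Fintype.card α / ψ)) * 
      (2 ^ (Fintype.card α - j) + 2 ^ (Fintype.card α - t) * MM α (2 * j)) := by
  set K := Fintype.card α / ψ
  set Q := ((Finset.univ : Finset (Finset α)).filter (fun S => S.card ≤ K)) with hQ
  have h1 : PT nb t ⊆ (Q ×ˢ Q).biUnion (fun q => PP nb t j ψ q.1 q.2) := by
    intro p hp
    simp only [PT, Finset.mem_filter, Finset.mem_univ, true_and] at hp
    obtain ⟨T, hT, hTc, hT1⟩ := greedy nb (NN nb (NN nb p.1)) ψ hψ0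
    obtain ⟨T', hT', hTc', hT1'⟩ := greedy nb (NN nb p.1) ψ hψ0
    rw [Finset.mem_biUnion]
    refine ⟨(T, T'), ?_, ?_⟩
    · simp only [Finset.mem_product, hQ, Finset.mem_filter, Finset.mem_univ, true_and]
      constructor <;> (rw [Nat.le_div_iff_mul_le hψ0, mul_comm]; assumption)
    · simp only [PP, Finset.mem_filter, Finset.mem_univ, true_and]
      refine ⟨hp.1, hp.2, ?_, ?_, ?_⟩
      · exact sub_DD nb hs _ (NN nb p.1) T T' rfl hT' ψ hT1
      · exact sub_DD nb hs _ (NN nb (NN nb p.1)) T' T (NN3 nb hs _).symm hT ψ hT1'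
      · have := DD_size nb hs n hn (NN nb (NN nb p.1)) (NN nb p.1) rfl (NN3 nb hs _).symm t hp.2 ψ hψ T T' hT hT'
        apply Nat.le_of_mul_le_mul_left _ hn0
        rw [Nat.mul_add n (Fintype.card α) j]
        omega
  refine (Finset.card_le_card h1).trans ?_
  refine (Finset.card_biUnion_le_card_mul _ _ _ (fun q _ => PP_card nb hs t j ψ q.1 q.2)).trans ?_
  rw [Finset.card_product]; rfl

theorem exists_t (hs : ∀ x y, y ∈ nb x ↔ x ∈ nb y) (n : ℕ) (hn : ∀ x, (nb x).card = n) (hn0 : 0 < n)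
    (A : Finset α) : ∃ t, (NN nb (NN nb A)).card + (NN nb A).card + t = Fintype.card α := by
  set F := NN nb A
  suffices h : (NN nb F).card + F.card ≤ Fintype.card α from ⟨_, Nat.add_sub_cancel' h⟩
  have e2 : ∑ x ∈ NN nb F, (nb x ∩ Fᶜ).card = ∑ y ∈ Fᶜ, (nb y ∩ NN nb F).card := edge_symm nb hs _ _
  have e3 : ∑ x ∈ NN nb F, (nb x ∩ Fᶜ).card = n * (NN nb F).card := by
    rw [Finset.sum_congr rfl (g := fun _ => n), Finset.sum_const, smul_eq_mul, mul_comm]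
    intro x hx
    rw [← hn x]; congr 1
    rw [Finset.inter_eq_left, Finset.subset_compl_iff_disjoint_right]
    simpa [NN] using hx
  have e4 : ∑ y ∈ Fᶜ, (nb y ∩ NN nb F).card ≤ n * Fᶜ.card := by
    rw [mul_comm, ← smul_eq_mul]
    apply Finset.sum_le_card_nsmul
    intro x hx
    rw [← hn x]
    exact Finset.card_le_card Finset.inter_subset_left
  have : n * (NN nb F).card ≤ n * Fᶜ.card := by omega
  have := Nat.le_of_mul_le_mul_left this hn0
  have e5 : Fᶜ.card + F.card = Fintype.card α := Finset.card_compl_add_card F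
  omega

/-- the total count, given isoperimetry with lower bound t0 on t. -/
theorem total_count (hs : ∀ x y, y ∈ nb x ↔ x ∈ nb y) (n : ℕ) (hn : ∀ x, (nb x).card = n) (hn0 : 0 < n)
    (σ : α → α) (k t0 : ℕ)
    (hiso : ∀ A : Finset α, ∀ t, NN nb (NN nb A) = A → A.card + (NN nb A).card + t = Fintype.card α → 
      k < A.card → A.card + k < Fintype.card α → t0 ≤ t)
    (C : ℕ) (hC : ∀ t, t0 ≤ t → t ≤ Fintype.card α → (PT nb t).card ≤ C) :
    ((Finset.univ : Finset (Finset α × Finset α)).filter (fun p => p.2 ⊆ NN nb p.1 ∧ 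
      (∀ u ∈ p.1, σ u ∉ p.1) ∧ (∀ u ∈ p.2, σ u ∉ p.2))).card ≤
      2 * (MM α k * ((Finset.univ : Finset (Finset α)).filter (fun A => ∀ u ∈ A, σ u ∉ A)).card)
       + (Fintype.card α + 1) * C := by
  set Z := (Finset.univ : Finset (Finset α)).filter (fun A => ∀ u ∈ A, σ u ∉ A) with hZ
  set Q := ((Finset.univ : Finset (Finset α)).filter (fun S => S.card ≤ k)) with hQ
  have hcl : ∀ A, A ⊆ NN nb (NN nb A) := fun A => (sub_NN nb hs).1 subset_rfl
  have hsub : (Finset.univ : Finset (Finset α × Finset α)).filter (fun p => p.2 ⊆ NN nb p.1 ∧ 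
      (∀ u ∈ p.1, σ u ∉ p.1) ∧ (∀ u ∈ p.2, σ u ∉ p.2)) ⊆ 
      (Q ×ˢ Z ∪ Z ×ˢ Q) ∪ ((Finset.range (Fintype.card α + 1)).filter (fun t => t0 ≤ t)).biUnion (fun t => PT nb t) := by
    intro p hp
    simp only [Finset.mem_filter, Finset.mem_univ, true_and] at hp
    obtain ⟨t, ht⟩ := exists_t nb hs n hn hn0 p.1
    simp only [Finset.mem_union, Finset.mem_product, hQ, hZ, Finset.mem_filter, Finset.mem_univ, true_and, 
      Finset.mem_biUnion, Finset.mem_range, PT]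
    by_cases h1 : (NN nb (NN nb p.1)).card ≤ k
    · left; left
      exact ⟨(Finset.card_le_card (hcl _)).trans h1, hp.2.2⟩
    by_cases h2 : (NN nb (NN nb p.1)).card + k < Fintype.card α
    · right
      refine ⟨t, ⟨by omega, ?_⟩, hp.1, ht⟩
      refine hiso (NN nb (NN nb p.1)) t ?_ ?_ (by omega) h2
      · rw [NN3 nb hs]
      · rw [NN3 nb hs]; exact ht
    · left; right
      refine ⟨hp.2.1, (Finset.card_le_card hp.1).trans (by omega)⟩
  refine (Finset.card_le_card hsub).trans ((Finset.card_union_le _ _).trans (Nat.add_le_add 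
    ((Finset.card_union_le _ _).trans ?_) ?_))
  · rw [Finset.card_product, Finset.card_product]
    have : Q.card = MM α k := rfl
    rw [this]; nlinarith
  · refine (Finset.card_biUnion_le_card_mul _ _ C ?_).trans ?_
    · intro t ht
      simp only [Finset.mem_filter, Finset.mem_range] at ht
      exact hC t ht.2 (by omega)
    · apply Nat.mul_le_mul_right
      refine (Finset.card_filter_le _ _).trans (by simp)
end abs

section cube

theorem sum_cons {m : ℕ} (f : V (m + 1) → ℝ) :
    ∑ x, f x = ∑ u : V m, f (Fin.cons 0 u) + ∑ u : V m, f (Fin.cons 1 u) := by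
  rw [← (Fin.consEquiv (fun _ : Fin (m + 1) => ZMod 2)).sum_comp, Fintype.sum_prod_type]
  exact Fin.sum_univ_two (fun c : Fin 2 => ∑ u : V m, f (Fin.cons (c : ZMod 2) u))

theorem cons_add_zero {m : ℕ} (c : ZMod 2) (u : V m) : 
    (Fin.cons c u : V (m + 1)) + Pi.single 0 1 = Fin.cons (c + 1) u := by
  ext i
  refine Fin.cases ?_ (fun i => ?_) i <;> simp

theorem cons_add_succ {m : ℕ} (c : ZMod 2) (u : V m) (i : Fin m) : 
    (Fin.cons c u : V (m + 1)) + Pi.single i.succ 1 = Fin.cons c (u + Pi.single i 1) := by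
  ext k
  refine Fin.cases ?_ (fun k => ?_) k
  · simp [Pi.single_apply, (Fin.succ_ne_zero i).symm]
  · simp [Pi.single_apply]

/-- number of outgoing edges -/
noncomputable def hh {m : ℕ} (S : Finset (V m)) (x : V m) : ℝ :=
  if x ∈ S then ∑ i : Fin m, (if x + Pi.single i 1 ∈ S then (0:ℝ) else 1) else 0

theorem hh_nonneg {m : ℕ} (S : Finset (V m)) (x : V m) : 0 ≤ hh S x := by
  unfold hh
  split_ifs
  · exact Finset.sum_nonneg (fun i _ => by split_ifs <;> norm_num)
  · exact le_rfl

theorem hh_le {m : ℕ} (S : Finset (V m)) (x : V m) : hh S x ≤ m := by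
  unfold hh
  split_ifs
  · calc _ ≤ ∑ i : Fin m, (1:ℝ) := Finset.sum_le_sum (fun i _ => by split_ifs <;> norm_num)
      _ = m := by simp
  · positivity

/-- slice -/
def sl {m : ℕ} (S : Finset (V (m + 1))) (c : ZMod 2) : Finset (V m) :=
  Finset.univ.filter (fun u => (Fin.cons c u : V (m + 1)) ∈ S)

theorem hh_cons {m : ℕ} (S : Finset (V (m + 1))) (c : ZMod 2) (u : V m) :
    hh S (Fin.cons c u) = hh (sl S c) u + (if u ∈ sl S c \ sl S (c + 1) then 1 else 0) := by
  unfold hh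
  simp only [sl, Finset.mem_filter, Finset.mem_univ, true_and, Finset.mem_sdiff, Fin.sum_univ_succ, 
    cons_add_zero, cons_add_succ]
  by_cases h : (Fin.cons c u : V (m + 1)) ∈ S
  · by_cases h2 : (Fin.cons (c + 1) u : V (m + 1)) ∈ S <;> simp [h, h2, add_comm]
  · simp [h]

theorem vec_tri {β : Type*} (s : Finset β) (p q : β → ℝ) (hp : ∀ u, 0 ≤ p u) :
    Real.sqrt ((∑ u ∈ s, Real.sqrt (p u)) ^ 2 + (∑ u ∈ s, q u) ^ 2) ≤ ∑ u ∈ s, Real.sqrt (p u + q u ^ 2) := by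
  set X := ∑ u ∈ s, Real.sqrt (p u)
  set Y := ∑ u ∈ s, q u
  set R := Real.sqrt (X ^ 2 + Y ^ 2) with hR
  have hR2 : R ^ 2 = X ^ 2 + Y ^ 2 := Real.sq_sqrt (by positivity)
  have hR0 : 0 ≤ R := Real.sqrt_nonneg _
  rcases hR0.eq_or_lt with h0 | h0
  · rw [← h0]; exact Finset.sum_nonneg (fun _ _ => Real.sqrt_nonneg _)
  have key : ∀ u ∈ s, Real.sqrt (p u) * X + q u * Y ≤ Real.sqrt (p u + q u ^ 2) * R := by
    intro u _
    rw [hR, ← Real.sqrt_mul (by have := hp u; positivity)]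
    apply Real.le_sqrt_of_sq_le
    have h1 := Real.sq_sqrt (hp u)
    set w := Real.sqrt (p u)
    rw [← h1]
    nlinarith [sq_nonneg (w * Y - q u * X)]
  have h2 := Finset.sum_le_sum key
  rw [Finset.sum_add_distrib, ← Finset.sum_mul, ← Finset.sum_mul, ← Finset.sum_mul] at h2
  have h3 : R * R ≤ (∑ u ∈ s, Real.sqrt (p u + q u ^ 2)) * R := by nlinarith
  exact le_of_mul_le_mul_right h3 h0

theorem half_bound {m : ℕ} (S : Finset (V (m + 1))) (c : ZMod 2) (X : ℝ) (hX0 : 0 ≤ X)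
    (hX : X ≤ ∑ u, Real.sqrt (hh (sl S c) u)) (Y : ℝ) (hY0 : 0 ≤ Y) (hY : Y ≤ (sl S c).card - (sl S (c+1)).card) :
    Real.sqrt (X ^ 2 + Y ^ 2) ≤ ∑ u, Real.sqrt (hh S (Fin.cons c u)) := by
  have h := vec_tri Finset.univ (fun u => hh (sl S c) u) (fun u => if u ∈ sl S c \ sl S (c + 1) then 1 else 0)
    (fun u => hh_nonneg _ _)
  have h2 : ∀ u, hh (sl S c) u + (if u ∈ sl S c \ sl S (c + 1) then (1:ℝ) else 0) ^ 2 = hh S (Fin.cons c u) := by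
    intro u; rw [hh_cons]; split_ifs <;> simp
  simp only [h2] at h
  refine le_trans (Real.sqrt_le_sqrt ?_) h
  have h3 : Y ≤ ∑ u : V m, if u ∈ sl S c \ sl S (c + 1) then (1:ℝ) else 0 := by
    rw [Finset.sum_boole]
    simp only [Finset.filter_univ_mem]
    have := Finset.le_card_sdiff (sl S (c+1)) (sl S c)
    have : ((sl S c).card : ℝ) ≤ (sl S c \ sl S (c+1)).card + (sl S (c+1)).card := by
      exact_mod_cast (by omega)
    linarith
  gcongr

theorem two_point (a b M : ℝ) (hM : 0 < M) (ha : a ≤ M) (hb0 : 0 ≤ b) (hab : b ≤ a) :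
    (a + b) * (2 * M - (a + b)) / (2 * M) ≤ 
     Real.sqrt ((a * (M - a) / M) ^ 2 + (a - b) ^ 2) + b * (M - b) / M := by
  have h1 : a * (M - a) / M + (a - b) ^ 2 / (2 * M) ≤ Real.sqrt ((a * (M - a) / M) ^ 2 + (a - b) ^ 2) := by
    apply Real.le_sqrt_of_sq_le
    have hJ : a * (M - a) / M ≤ M / 4 := by
      rw [div_le_iff₀ hM]; nlinarith [sq_nonneg (M - 2 * a)]
    set J := a * (M - a) / M
    have hd : (a - b) ^ 2 ≤ M ^ 2 := by nlinarith
    have : (J + (a - b) ^ 2 / (2 * M)) ^ 2 = J ^ 2 + (a - b) ^ 2 * (J / M + (a - b) ^ 2 / (4 * M ^ 2)) := by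
      field_simp; ring
    rw [this]
    have h3 : J / M ≤ 1 / 4 := by rw [div_le_iff₀ hM]; linarith
    have h4 : (a - b) ^ 2 / (4 * M ^ 2) ≤ 1 / 4 := by
      rw [div_le_iff₀ (by positivity)]; linarith
    nlinarith [sq_nonneg (a - b)]
  have h2 : (a + b) * (2 * M - (a + b)) / (2 * M) = a * (M - a) / M + (a - b) ^ 2 / (2 * M) + b * (M - b) / M := by
    field_simp; ring
  linarith

theorem isop : ∀ (m : ℕ) (S : Finset (V m)), 
    (S.card : ℝ) * (2 ^ m - S.card) / 2 ^ m ≤ ∑ x, Real.sqrt (hh S x) := by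
  intro m
  induction m with
  | zero =>
    intro S
    have : S.card ≤ 1 := by
      have := Finset.card_le_univ S
      simpa using this
    refine le_trans ?_ (Finset.sum_nonneg (fun _ _ => Real.sqrt_nonneg _))
    interval_cases S.card <;> simp
  | succ m ih =>
    intro S
    have hcard : (S.card : ℝ) = (sl S 0).card + (sl S 1).card := by
      have := sum_cons (m := m) (fun x => if x ∈ S then 1 else 0)
      simpa [Finset.sum_boole, sl] using this
    have hle : ∀ c, ((sl S c).card : ℝ) ≤ 2 ^ m := by
      intro c
      have := Finset.card_le_univ (sl S c)
      simp only [Fintype.card_pi, ZMod.card, Finset.prod_const, Finset.card_univ, Fintype.card_fin] at this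
      exact_mod_cast this
    have hJ : ∀ c, 0 ≤ ((sl S c).card : ℝ) * (2 ^ m - (sl S c).card) / 2 ^ m := by
      intro c
      have := hle c
      have : 0 ≤ (2:ℝ) ^ m - (sl S c).card := by linarith
      positivity
    have hb : ∀ c, ((sl S c).card : ℝ) * (2 ^ m - (sl S c).card) / 2 ^ m ≤ ∑ u, Real.sqrt (hh S (Fin.cons c u)) := by
      intro c
      refine (ih (sl S c)).trans (Finset.sum_le_sum (fun u _ => Real.sqrt_le_sqrt ?_))
      rw [hh_cons]; split_ifs <;> simp
    have main : ∀ c, ((sl S (c+1)).card : ℝ) ≤ (sl S c).card → 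
       ((sl S c).card + (sl S (c+1)).card : ℝ) * (2 * 2 ^ m - ((sl S c).card + (sl S (c+1)).card)) / (2 * 2 ^ m)
        ≤ ∑ u, Real.sqrt (hh S (Fin.cons c u)) + ∑ u, Real.sqrt (hh S (Fin.cons (c+1) u)) := by
      intro c hc
      refine (two_point _ _ (2 ^ m) (by positivity) (hle c) (by positivity) hc).trans ?_
      apply add_le_add
      · exact half_bound S c _ (hJ c) (ih _) _ (by linarith) le_rfl
      · exact hb _
    rw [sum_cons, hcard, pow_succ, mul_comm ((2:ℝ) ^ m) 2]
    have e11 : (1 + 1 : ZMod 2) = 0 := by decide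
    rcases le_total ((sl S 1).card : ℝ) (sl S 0).card with h | h
    · have := main 0
      rw [zero_add] at this
      exact this h
    · have := main 1
      rw [e11] at this
      have := this h
      rw [add_comm ((sl S 0).card : ℝ), add_comm (∑ u, Real.sqrt (hh S (Fin.cons 0 u)))]
      exact this

/-- closed neighbourhood -/
def nbh {m : ℕ} (x : V m) : Finset (V m) :=
  insert x (Finset.univ.image (fun i => x + Pi.single i 1))

theorem self_add {m : ℕ} (x : V m) : x + x = 0 := by
  ext i; exact CharTwo.add_self_eq_zero (x i)

theorem nbh_symm {m : ℕ} (x y : V m) : y ∈ nbh x ↔ x ∈ nbh y := by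
  have key : ∀ x y : V m, y ∈ nbh x → x ∈ nbh y := by
    intro x y h
    simp only [nbh, Finset.mem_insert, Finset.mem_image, Finset.mem_univ, true_and] at h ⊢
    rcases h with h | ⟨i, h⟩
    · left; exact h.symm
    · right; refine ⟨i, ?_⟩
      rw [← h, add_assoc, self_add, add_zero]
  exact ⟨key x y, key y x⟩

theorem nbh_card {m : ℕ} (x : V m) : (nbh x).card = m + 1 := by
  unfold nbh
  rw [Finset.card_insert_of_notMem, Finset.card_image_of_injective]
  · simp
  · intro i j h
    have h := add_left_cancel h
    by_contra hij
    have := congrFun h i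
    simp [Pi.single_apply, hij] at this
  · simp

theorem card_V (m : ℕ) : Fintype.card (V m) = 2 ^ m := by simp [ZMod.card]

theorem iso_t {m : ℕ} (A : Finset (V m)) (t : ℕ) 
    (ht : A.card + (NN nbh A).card + t = Fintype.card (V m)) :
    (A.card : ℝ) * (2 ^ m - A.card) / 2 ^ m ≤ t * Real.sqrt m := by
  have h := isop m Aᶜ
  have hc : (Aᶜ.card : ℝ) = 2 ^ m - A.card := by
    have := Finset.card_compl_add_card A
    rw [card_V] at this
    have : (Aᶜ.card : ℝ) + A.card = 2 ^ m := by exact_mod_cast this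
    linarith
  rw [hc] at h
  have h2 : ∑ x, Real.sqrt (hh Aᶜ x) ≤ t * Real.sqrt m := by
    have hz : ∀ x, x ∈ A ∪ NN nbh A → hh Aᶜ x = 0 := by
      intro x hx
      unfold hh
      split_ifs with h1
      · have h1 : x ∉ A := by simpa using h1
        have hx : x ∈ NN nbh A := by simpa [h1] using hx
        simp only [NN, Finset.mem_filter, Finset.mem_univ, true_and] at hx
        apply Finset.sum_eq_zero
        intro i _
        rw [if_pos]
        rw [Finset.mem_compl]
        apply Finset.disjoint_left.1 hx
        simp [nbh]
      · rfl
    have hd : Disjoint A (NN nbh A) := by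
      rw [Finset.disjoint_right]
      intro x hx
      simp only [NN, Finset.mem_filter, Finset.mem_univ, true_and] at hx
      apply Finset.disjoint_left.1 hx
      simp [nbh]
    have hcc : (A ∪ NN nbh A)ᶜ.card = t := by
      have := Finset.card_compl_add_card (A ∪ NN nbh A)
      rw [Finset.card_union_of_disjoint hd] at this
      omega
    calc ∑ x, Real.sqrt (hh Aᶜ x) = ∑ x ∈ (A ∪ NN nbh A)ᶜ, Real.sqrt (hh Aᶜ x) := by
          symm
          apply Finset.sum_subset (Finset.subset_univ _)
          intro x _ hx
          rw [hz x (by by_contra hcon; exact hx (Finset.mem_compl.2 hcon)), Real.sqrt_zero]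
      _ ≤ ∑ x ∈ (A ∪ NN nbh A)ᶜ, Real.sqrt m := Finset.sum_le_sum (fun x _ => Real.sqrt_le_sqrt (hh_le _ _))
      _ = _ := by rw [Finset.sum_const, hcc, nsmul_eq_mul]
  refine le_trans (le_of_eq ?_) (h.trans h2)
  ring

theorem iso_k {m : ℕ} (k : ℕ) (A : Finset (V m)) (t : ℕ) 
    (ht : A.card + (NN nbh A).card + t = Fintype.card (V m)) (h1 : k < A.card) (h2 : A.card + k < Fintype.card (V m)) :
    (k : ℝ) / 2 ≤ t * Real.sqrt m := by
  refine le_trans ?_ (iso_t A t ht)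
  rw [card_V] at h2
  have h1 : (k : ℝ) ≤ A.card := by exact_mod_cast h1.le
  have h2 : (A.card : ℝ) + k ≤ 2 ^ m := by exact_mod_cast h2.le
  have h0 : (0 : ℝ) < 2 ^ m := by positivity
  have hk : (0 : ℝ) ≤ k := by positivity
  rw [le_div_iff₀ h0]
  set a := (A.card : ℝ)
  set M := (2 : ℝ) ^ m
  rcases le_total (2 * a) M with h | h <;> nlinarith

/-- parity -/
def par {m : ℕ} (u : V m) : ZMod 2 := ∑ i, u i

theorem par_add {m : ℕ} (u w : V m) : par (u + w) = par u + par w := by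
  simp [par, Finset.sum_add_distrib]

theorem par_single {m : ℕ} (i : Fin m) : par (Pi.single i 1 : V m) = 1 := by
  simp [par]

theorem par_eq_norm {m : ℕ} (v : V m) : par v = (hammingNorm v : ZMod 2) := by
  unfold par hammingNorm
  rw [Finset.card_filter]
  push_cast
  apply Finset.sum_congr rfl
  intro i _
  have h01 : ∀ a : ZMod 2, a = 0 ∨ a = 1 := by decide
  rcases h01 (v i) with h | h <;> simp [h]

theorem dist_single {n : ℕ} (x : V n) (i : Fin n) : hammingDist x (x + Pi.single i 1) = 1 := by
  unfold hammingDist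
  rw [Finset.card_eq_one]
  refine ⟨i, ?_⟩
  ext j
  by_cases h : j = i
  · subst h; simp
  · simp [h]

theorem adj_single {n : ℕ} (v x : V n) (i : Fin n) : (QCay n v).Adj x (x + Pi.single i 1) := by
  unfold QCay
  rw [SimpleGraph.fromRel_adj]
  refine ⟨?_, Or.inl (Or.inl (dist_single x i))⟩
  intro h
  have := dist_single x i
  rw [← h] at this
  simp at this

theorem adj_v {n : ℕ} (v x : V n) (hv : v ≠ 0) : (QCay n v).Adj x (x + v) := by
  unfold QCay
  rw [SimpleGraph.fromRel_adj]
  refine ⟨?_, Or.inl (Or.inr (by rw [← add_assoc, self_add, zero_add]))⟩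
  intro h
  exact hv (by simpa using h.symm)

theorem reduction {m : ℕ} (v : V (m + 1)) (hv : v ≠ 0) (he : Even (hammingNorm v)) :
    ∃ z : V m, z ≠ 0 ∧ 
    {I : Finset (V (m+1)) | ∀ x ∈ I, ∀ y ∈ I, ¬ (QCay (m+1) v).Adj x y}.ncard ≤ 
    ((Finset.univ : Finset (Finset (V m) × Finset (V m))).filter (fun p => p.2 ⊆ NN nbh p.1 ∧ 
      (∀ u ∈ p.1, u + z ∉ p.1) ∧ (∀ u ∈ p.2, u + z ∉ p.2))).card := by
  set z : V m := Fin.tail v with hz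
  have hvz : v = Fin.cons (par z) z := by
    have h1 : par v = v 0 + par z := by
      simp [par, Fin.sum_univ_succ, hz, Fin.tail]
    have h2 : par v = 0 := by
      rw [par_eq_norm]
      obtain ⟨r, hr⟩ := he
      rw [hr]; push_cast
      exact CharTwo.add_self_eq_zero _
    have h3 : v 0 = par z := by
      rw [h2] at h1
      exact CharTwo.add_eq_zero.1 h1.symm
    rw [← h3]; exact (Fin.cons_self_tail v).symm
  have hvadd : ∀ (c : ZMod 2) (u : V m), (Fin.cons (par u + c) u : V (m+1)) + v = Fin.cons (par (u + z) + c) (u + z) := by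
    intro c u
    rw [hvz, par_add]
    ext i
    refine Fin.cases ?_ (fun i => ?_) i
    · simp; ring
    · simp
  refine ⟨z, ?_, ?_⟩
  · intro h0
    apply hv
    rw [hvz, h0]
    ext i
    refine Fin.cases ?_ (fun i => ?_) i <;> simp [par]
  · rw [← Set.ncard_coe_finset]
    let f : ZMod 2 → Finset (V (m+1)) → Finset (V m) := fun c I =>
      Finset.univ.filter (fun u => (Fin.cons (par u + c) u : V (m+1)) ∈ I)
    apply Set.ncard_le_ncard_of_injOn (fun I => (f 0 I, f 1 I))
    · intro I hI
      have hI : ∀ x ∈ I, ∀ y ∈ I, ¬ (QCay (m+1) v).Adj x y := hI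
      have hmatch : ∀ c, ∀ u ∈ f c I, u + z ∉ f c I := by
        intro c u hu hu2
        simp only [f, Finset.mem_filter, Finset.mem_univ, true_and] at hu hu2
        apply hI _ hu _ hu2
        rw [← hvadd]
        exact adj_v _ _ hv
      simp only [Finset.coe_filter, Finset.mem_univ, true_and]
      refine ⟨?_, hmatch 0, hmatch 1⟩
      intro y hy
      simp only [NN, Finset.mem_filter, Finset.mem_univ, true_and]
      rw [Finset.disjoint_left]
      intro x hx hxA
      simp only [f, Finset.mem_filter, Finset.mem_univ, true_and] at hy hxA
      simp only [nbh, Finset.mem_insert, Finset.mem_image, Finset.mem_univ, true_and] at hx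
      rcases hx with rfl | ⟨i, rfl⟩
      · apply hI _ hxA _ hy
        have := adj_single v (Fin.cons (par x + 0) x : V (m+1)) 0
        rw [cons_add_zero] at this
        rw [add_zero] at this ⊢
        exact this
      · apply hI _ hy _ hxA
        have := adj_single v (Fin.cons (par y + 1) y : V (m+1)) i.succ
        rw [cons_add_succ] at this
        rwa [par_add, par_single, add_zero]
    · intro I _ J _ h
      simp only [Prod.mk.injEq] at h
      have key : ∀ c u, ((Fin.cons (par u + c) u : V (m+1)) ∈ I ↔ (Fin.cons (par u + c) u : V (m+1)) ∈ J) := by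
        intro c u
        have hc : f c I = f c J := by
          have : c = 0 ∨ c = 1 := by revert c; decide
          rcases this with rfl | rfl
          · exact h.1
          · exact h.2
        have := Finset.ext_iff.1 hc u
        simpa [f] using this
      ext x
      have := key (x 0 - par (Fin.tail x)) (Fin.tail x)
      rw [add_sub_cancel, Fin.cons_self_tail] at this
      exact this
end cube

section asym

theorem MM_le' {α : Type*} [Fintype α] [DecidableEq α] (k : ℕ) (n : ℝ) (hn : 1 ≤ n) :
    (MM α k : ℝ) ≤ Real.exp (k * Real.log n + Fintype.card α / n) := by
  have h0 : 0 < n := by linarith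
  have h := MM_le (α := α) k (1 / n) (by positivity) (by rw [div_le_one h0]; exact hn)
  rw [Real.exp_add, Real.exp_nat_mul, Real.exp_log h0]
  rw [one_div, inv_pow, ← div_eq_mul_inv, div_le_iff₀ (by positivity)] at h
  calc _ ≤ _ := h
    _ = _ := by rw [mul_comm, div_eq_inv_mul]

theorem two_pow_sub (N j : ℕ) (h : j ≤ N) : (2:ℝ) ^ (N - j) ≤ 2 ^ N * Real.exp (-(j / 2)) := by
  have h1 : Real.exp (j / 2 : ℝ) ≤ 2 ^ j := by
    have : (j / 2 : ℝ) = j * (1 / 2) := by ring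
    rw [this, Real.exp_nat_mul]
    apply pow_le_pow_left₀ (Real.exp_pos _).le
    have h2 := Real.exp_one_lt_d9
    have h3 : Real.exp (1 / 2) ^ 2 = Real.exp 1 := by rw [← Real.exp_nat_mul]; norm_num
    nlinarith [Real.exp_pos (1/2)]
  have h2 : (2:ℝ) ^ N = 2 ^ (N - j) * 2 ^ j := by rw [← pow_add]; congr 1; omega
  rw [h2, Real.exp_neg, mul_assoc]
  have h3 : 1 ≤ (2:ℝ) ^ j * (Real.exp (j / 2))⁻¹ := by
    rw [← div_eq_mul_inv, one_le_div (Real.exp_pos _)]; exact h1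
  have : (0:ℝ) < 2 ^ (N - j) := by positivity
  nlinarith

theorem PT_bound {m : ℕ} (s : ℝ) (hs8 : s ^ 8 = ((m + 1 : ℕ) : ℝ)) (hs : 4000 ≤ s)
    (hL : Real.log ((m + 1 : ℕ) : ℝ) ≤ s / 1000) (t : ℕ) (htN : t ≤ 2 ^ m)
    (hNt : (2:ℝ) ^ m ≤ 400 * s ^ 4 * t) (hts : s ≤ t) :
    ((PT (nbh (m := m)) t).card : ℝ) ≤ 2 * (2 ^ (2 ^ m) * Real.exp (-(t / (2 * s)))) := by
  set n : ℕ := m + 1 with hn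
  set N : ℕ := 2 ^ m with hN
  have hNr : ((N : ℕ) : ℝ) = 2 ^ m := by rw [hN]; push_cast; rfl
  have s0 : 0 < s := by linarith
  have hs7 : 1 ≤ s ^ 7 := one_le_pow₀ (by linarith)
  set ψ : ℕ := ⌊s ^ 7⌋₊ with hψ
  have ψle : (ψ : ℝ) ≤ s ^ 7 := Nat.floor_le (by positivity)
  have ψge : s ^ 7 / 2 ≤ (ψ : ℝ) := by
    have h1 : 1 ≤ ψ := Nat.le_floor (by simpa using hs7)
    have h1 : (1:ℝ) ≤ ψ := by exact_mod_cast h1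
    have h2 : s ^ 7 < (ψ : ℝ) + 1 := Nat.lt_floor_add_one _
    linarith
  have ψ0 : 0 < ψ := by
    have : (0:ℝ) < ψ := lt_of_lt_of_le (by positivity) ψge
    exact_mod_cast this
  have ψn : 2 * ψ ≤ n := by
    have : (2:ℝ) * ψ ≤ n := by
      rw [← hs8]; nlinarith [pow_succ s 7]
    exact_mod_cast this
  have hnpos : 0 < n := Nat.succ_pos m
  set j : ℕ := 4 * ψ * t / n + 1 with hj
  have hj1 : 4 * ψ * t ≤ n * j := by
    have := Nat.lt_mul_div_succ (4 * ψ * t) hnpos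
    exact this.le
  have t0 : (0:ℝ) < t := by linarith
  have hjlo : 2 * (t:ℝ) / s ≤ j := by
    have h1 : (4:ℝ) * ψ * t ≤ s ^ 8 * j := by rw [hs8]; exact_mod_cast hj1
    rw [div_le_iff₀ s0]
    have h2 : s ^ 7 * (2 * t) ≤ s ^ 7 * (j * s) := by
      calc s ^ 7 * (2 * (t:ℝ)) = 4 * (s ^ 7 / 2) * t := by ring
        _ ≤ 4 * (ψ:ℝ) * t := by gcongr
        _ ≤ _ := h1
        _ = _ := by ring
    exact le_of_mul_le_mul_left h2 (by positivity)
  have hjhi : (j:ℝ) ≤ 5 * t / s := by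
    have h1 : ((4 * ψ * t / n : ℕ) : ℝ) ≤ ((4 * ψ * t : ℕ) : ℝ) / n := Nat.cast_div_le
    have h2 : ((4 * ψ * t : ℕ) : ℝ) / n ≤ 4 * t / s := by
      rw [← hs8, div_le_div_iff₀ (by positivity) s0]
      push_cast
      calc 4 * (ψ:ℝ) * t * s ≤ 4 * s ^ 7 * t * s := by gcongr
        _ = _ := by ring
    have h3 : (1:ℝ) ≤ t / s := by rw [le_div_iff₀ s0]; linarith
    have h4 : 5 * (t:ℝ) / s = 4 * t / s + t / s := by ring
    rw [hj]; push_cast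
    linarith
  have htN' : (t:ℝ) ≤ N := by exact_mod_cast htN
  have hjN : j ≤ N := by
    have : (j:ℝ) ≤ N := by
      refine hjhi.trans (le_trans ?_ htN')
      rw [div_le_iff₀ s0]; nlinarith
    exact_mod_cast this
  have hmain := PT_card (nbh (m := m)) nbh_symm n nbh_card hnpos t j ψ ψ0 ψn hj1
  rw [card_V] at hmain
  have hn1 : (1:ℝ) ≤ (n:ℝ) := by exact_mod_cast hnpos
  have hL0 : 0 ≤ Real.log (n:ℝ) := Real.log_nonneg hn1
  set L := Real.log (n:ℝ) with hLdef
  set a := (t:ℝ) / s with ha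
  have a0 : 0 < a := by positivity
  have hta : (t:ℝ) = a * s := by rw [ha]; field_simp
  -- N/n bound
  have hNn : (N:ℝ) / n ≤ a / 1000 := by
    rw [← hs8, div_le_iff₀ (by positivity), hNr]
    refine hNt.trans ?_
    rw [hta]
    have : (400000:ℝ) ≤ s ^ 3 := by
      calc (400000:ℝ) ≤ 4000 ^ 3 := by norm_num
        _ ≤ s ^ 3 := by gcongr
    calc 400 * s ^ 4 * (a * s) = a * s ^ 5 * 400 := by ring
      _ ≤ a * s ^ 5 * (s ^ 3 / 1000) := by gcongr; linarith
      _ = _ := by ring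
  have hK : ((N / ψ : ℕ) : ℝ) * L ≤ a / 1000 := by
    have h1 : ((N / ψ : ℕ) : ℝ) ≤ (N:ℝ) / ψ := Nat.cast_div_le
    have h2 : (N:ℝ) / ψ ≤ 800 * a / s ^ 2 := by
      rw [div_le_div_iff₀ (by exact_mod_cast ψ0) (by positivity), hNr]
      calc (2:ℝ) ^ m * s ^ 2 ≤ (400 * s ^ 4 * t) * s ^ 2 := by gcongr
        _ = 800 * a * (s ^ 7 / 2) := by rw [hta]; ring
        _ ≤ _ := by gcongr
    calc ((N / ψ : ℕ) : ℝ) * L ≤ (800 * a / s ^ 2) * (s / 1000) := by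
          gcongr
          exact h1.trans h2
      _ = a * (4 / (5 * s)) := by field_simp; norm_num
      _ ≤ a * (1 / 1000) := by
          apply mul_le_mul_of_nonneg_left _ a0.le
          rw [div_le_div_iff₀ (by positivity) (by norm_num)]; linarith
      _ = _ := by ring
  have hMK : (MM (V m) (N / ψ) : ℝ) ≤ Real.exp (a / 500) := by
    refine (MM_le' (N / ψ) (n:ℝ) hn1).trans (Real.exp_le_exp.2 ?_)
    rw [card_V]
    linarith
  have hMj : (MM (V m) (2 * j) : ℝ) ≤ Real.exp (a * s / 50) := by
    refine (MM_le' (2 * j) (n:ℝ) hn1).trans (Real.exp_le_exp.2 ?_)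
    rw [card_V]
    have h1 : ((2 * j : ℕ) : ℝ) * L ≤ a * s / 100 := by
      push_cast
      calc 2 * (j:ℝ) * L ≤ 2 * (5 * t / s) * (s / 1000) := by gcongr
        _ = a * s / 100 := by rw [← hta]; field_simp; norm_num
    have : a / 1000 ≤ a * s / 100 := by nlinarith
    linarith
  have hm2 : ((PT (nbh (m := m)) t).card : ℝ) ≤ ((MM (V m) (N / ψ) : ℝ) * MM (V m) (N / ψ)) * 
      (2 ^ (N - j) + 2 ^ (N - t) * (MM (V m) (2 * j) : ℝ)) := by exact_mod_cast hmain
  refine hm2.trans ?_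
  have hjlo' : 2 * a ≤ j := by rw [ha]; linarith [hjlo, mul_div_assoc 2 (t:ℝ) s]
  calc _ ≤ (Real.exp (a / 500) * Real.exp (a / 500)) * 
        (2 ^ N * Real.exp (-(j / 2)) + 2 ^ N * Real.exp (-(t / 2)) * Real.exp (a * s / 50)) := by
        gcongr
        · exact two_pow_sub N j hjN
        · exact two_pow_sub N t htN
    _ = 2 ^ N * (Real.exp (a / 500 + a / 500 + -(j / 2)) + Real.exp (a / 500 + a / 500 + (-(t / 2) + a * s / 50))) := by
        simp only [Real.exp_add]; ring
    _ ≤ 2 ^ N * (Real.exp (-(a / 2)) + Real.exp (-(a / 2))) := by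
        gcongr
        · linarith
        · rw [hta]; nlinarith
    _ = _ := by
        have : (t:ℝ) / (2 * s) = a / 2 := by rw [ha]; field_simp
        rw [this]; ring

theorem small_bound {m : ℕ} (z : V m) (hz : z ≠ 0) (k : ℕ) (hk : 100 * k ≤ 2 ^ m) :
    (MM (V m) k : ℝ) * (((Finset.univ : Finset (Finset (V m))).filter (fun A => ∀ u ∈ A, u + z ∉ A)).card : ℝ)
      ≤ 2 ^ (2 ^ m) * Real.exp (-((2:ℝ) ^ m / 100)) := by
  have h1 := matching_count (α := V m) (fun u => u + z) 
    (fun u => by rw [add_assoc, self_add, add_zero]) (fun u h => hz (by simpa using h))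
  rw [card_V] at h1
  set Z := ((Finset.univ : Finset (Finset (V m))).filter (fun A => ∀ u ∈ A, u + z ∉ A)).card with hZ
  set N : ℕ := 2 ^ m with hN
  have hNr : ((N : ℕ) : ℝ) = 2 ^ m := by rw [hN]; push_cast; rfl
  have h2 : (MM (V m) k : ℝ) ≤ Real.exp (k * Real.log 20 + N / 20) := by
    have := MM_le' (α := V m) k 20 (by norm_num)
    rw [card_V] at this; exact this
  have l2 := Real.log_two_gt_d9
  have l20 : Real.log 20 ≤ 5 * Real.log 2 := by
    have : 5 * Real.log 2 = Real.log (2 ^ 5) := by rw [Real.log_pow]; norm_num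
    rw [this]; exact Real.log_le_log (by norm_num) (by norm_num)
  have l3 : 5 * Real.log 3 ≤ 8 * Real.log 2 := by
    have e1 : 8 * Real.log 2 = Real.log (2 ^ 8) := by rw [Real.log_pow]; norm_num
    have e2 : 5 * Real.log 3 = Real.log (3 ^ 5) := by rw [Real.log_pow]; norm_num
    rw [e1, e2]; exact Real.log_le_log (by norm_num) (by norm_num)
  have h3 : (Z : ℝ) ≤ Real.exp (N * (4 / 5 * Real.log 2)) := by
    have h4 : (Z : ℝ) ^ 2 ≤ 3 ^ N := by exact_mod_cast h1
    have h5 : (3:ℝ) ^ N ≤ Real.exp (N * (4 / 5 * Real.log 2)) ^ 2 := by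
      rw [← Real.exp_nat_mul]
      have : (3:ℝ) ^ N = Real.exp (N * Real.log 3) := by
        rw [Real.exp_nat_mul, Real.exp_log (by norm_num)]
      rw [this]
      apply Real.exp_le_exp.2
      push_cast
      have : (0:ℝ) ≤ N := by positivity
      nlinarith
    exact le_of_sq_le_sq (h4.trans h5) (Real.exp_pos _).le
  have e2 : (2:ℝ) ^ N = Real.exp (N * Real.log 2) := by
    rw [Real.exp_nat_mul, Real.exp_log (by norm_num)]
  rw [e2, ← Real.exp_add]
  calc _ ≤ Real.exp (k * Real.log 20 + N / 20) * Real.exp (N * (4 / 5 * Real.log 2)) := by gcongr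
    _ = Real.exp (k * Real.log 20 + N / 20 + N * (4 / 5 * Real.log 2)) := by rw [← Real.exp_add]
    _ ≤ _ := by
      apply Real.exp_le_exp.2
      rw [← hNr]
      have hk' : (100:ℝ) * k ≤ N := by exact_mod_cast hk
      have k0 : (0:ℝ) ≤ k := by positivity
      have : k * Real.log 20 ≤ N / 100 * (5 * Real.log 2) := by
        have : (k:ℝ) ≤ N / 100 := by linarith
        have : 0 ≤ Real.log 20 := Real.log_nonneg (by norm_num)
        gcongr
      nlinarith [(by positivity : (0:ℝ) ≤ N)]

set_option maxHeartbeats 1600000 in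
theorem final_m (m : ℕ) (s : ℝ) (hs8 : s ^ 8 = ((m + 1 : ℕ) : ℝ)) (hs : 4000 ≤ s)
    (hL : Real.log ((m + 1 : ℕ) : ℝ) ≤ s / 1000) 
    (y : ℝ) (hy : y ^ 2 = 2 ^ (m + 1)) (hy0 : 0 < y) (hyn : 3200 * ((m + 1 : ℕ) : ℝ) ≤ y)
    (v : V (m + 1)) (hv : v ≠ 0) (he : Even (hammingNorm v)) :
    ({I : Finset (V (m+1)) | ∀ x ∈ I, ∀ y ∈ I, ¬ (QCay (m+1) v).Adj x y}.ncard : ℝ) ≤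
      2 ^ (2 ^ m) * Real.exp (-y) := by
  obtain ⟨z, hz, hred⟩ := reduction v hv he
  generalize {I : Finset (V (m+1)) | ∀ x ∈ I, ∀ y ∈ I, ¬ (QCay (m+1) v).Adj x y}.ncard = R at hred ⊢
  clear hv he v
  set n : ℕ := m + 1 with hn
  set N : ℕ := 2 ^ m with hN
  have hNr : ((N : ℕ) : ℝ) = 2 ^ m := by rw [hN]; push_cast; rfl
  have hyN : y ^ 2 = 2 * N := by rw [hy, hNr, hn, pow_succ]; ring
  have s0 : 0 < s := by linarith
  have s5 : s ^ 5 ≤ (n:ℝ) := by rw [← hs8]; exact pow_le_pow_right₀ (by linarith) (by norm_num)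
  have s55 : (1:ℝ) ≤ s ^ 5 := one_le_pow₀ (by linarith)
  have s4 : s ^ 4 ≤ s ^ 5 := pow_le_pow_right₀ (by linarith) (by norm_num)
  have hn1 : (1:ℝ) ≤ (n:ℝ) := s55.trans s5
  have hNbig : 1600 * s ^ 5 * y ≤ N := by nlinarith
  set k : ℕ := N / 100 with hk
  set t0 : ℕ := ⌈(N:ℝ) / (400 * s ^ 4)⌉₊ with ht0
  have hklo : (N:ℝ) / 200 ≤ k := by
    have h1 : N < 100 * (k + 1) := Nat.lt_mul_div_succ N (by norm_num)
    have h1 : (N:ℝ) < 100 * (k + 1) := by exact_mod_cast h1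
    have : (200:ℝ) ≤ N := by nlinarith
    linarith
  set X := 2 * ((2:ℝ) ^ N * Real.exp (-(N / (800 * s ^ 5)))) with hX
  have hX0 : 0 ≤ X := by positivity
  have htot := total_count (nbh (m := m)) nbh_symm n nbh_card (Nat.succ_pos m) (fun u => u + z) k t0
    (by
      intro A t _ ht h1 h2
      have := iso_k k A t ht h1 h2
      apply Nat.ceil_le.2
      rw [div_le_iff₀ (by positivity)]
      have hsm : Real.sqrt m ≤ s ^ 4 := by
        rw [Real.sqrt_le_left (by positivity)]
        calc (m:ℝ) ≤ (n:ℝ) := by rw [hn]; push_cast; linarith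
          _ = (s ^ 4) ^ 2 := by rw [← hs8]; ring
      have : (t:ℝ) * Real.sqrt m ≤ t * s ^ 4 := by gcongr
      nlinarith)
    ⌊X⌋₊
    (by
      intro t ht htN
      rw [card_V] at htN
      apply Nat.le_floor
      have h1 : (N:ℝ) / (400 * s ^ 4) ≤ t := Nat.ceil_le.1 ht
      have h2 : (N:ℝ) ≤ 400 * s ^ 4 * t := by
        rw [div_le_iff₀ (by positivity)] at h1; linarith
      refine (PT_bound s hs8 hs hL t htN (by rw [← hNr]; exact h2) ?_).trans ?_
      · have hy1 : 1 ≤ y := by nlinarith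
        have : 400 * s ^ 4 * s ≤ 400 * s ^ 4 * t := by
          calc 400 * s ^ 4 * s = 400 * s ^ 5 := by ring
            _ ≤ 1600 * s ^ 5 * y := by nlinarith
            _ ≤ N := hNbig
            _ ≤ _ := h2
        exact le_of_mul_le_mul_left this (by positivity)
      · rw [hX]
        apply mul_le_mul_of_nonneg_left _ (by norm_num)
        apply mul_le_mul_of_nonneg_left _ (by positivity)
        apply Real.exp_le_exp.2
        apply neg_le_neg
        rw [div_le_div_iff₀ (by positivity) (by positivity)]
        calc (N:ℝ) * (2 * s) ≤ (400 * s ^ 4 * t) * (2 * s) := by gcongr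
          _ = _ := by ring)
  rw [card_V] at htot
  have hsm := small_bound z hz k (Nat.mul_div_le N 100)
  have hfl : ((⌊X⌋₊ : ℕ) : ℝ) ≤ X := Nat.floor_le hX0
  have hall : (R : ℝ) ≤ 
      2 * ((MM (V m) k : ℝ) * (((Finset.univ : Finset (Finset (V m))).filter (fun A => ∀ u ∈ A, u + z ∉ A)).card : ℝ))
       + ((N : ℝ) + 1) * ((⌊X⌋₊ : ℕ) : ℝ) := by
    exact_mod_cast hred.trans htot
  refine hall.trans ?_
  have hE : Real.exp (-((2:ℝ) ^ m / 100)) ≤ Real.exp (-(N / (800 * s ^ 5))) := by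
    apply Real.exp_le_exp.2
    rw [← hNr]
    apply neg_le_neg
    apply div_le_div_of_nonneg_left (by positivity) (by norm_num)
    nlinarith
  have hE2 : Real.exp (-(N / (800 * s ^ 5))) ≤ Real.exp (-(2 * y)) := by
    apply Real.exp_le_exp.2
    apply neg_le_neg
    rw [le_div_iff₀ (by positivity)]
    nlinarith
  have hE3 : 2 * (N:ℝ) + 4 ≤ Real.exp y := by
    have h1 := Real.quadratic_le_exp_of_nonneg hy0.le
    have h3 := Real.add_one_le_exp (y / 2)
    have h2 : Real.exp y = Real.exp (y / 2) ^ 2 := by rw [← Real.exp_nat_mul]; congr 1; push_cast; ring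
    have h4 := Real.quadratic_le_exp_of_nonneg (x := y / 2) (by linarith)
    have h5 : y ^ 2 / 8 ≤ Real.exp (y / 2) := by nlinarith
    have h6 : (y ^ 2 / 8) ^ 2 ≤ Real.exp (y / 2) ^ 2 := by gcongr
    have hy3 : 3200 ≤ y := by linarith
    rw [h2]
    refine le_trans ?_ h6
    rw [← hyN]
    have : 3200 ^ 2 ≤ y ^ 2 := by gcongr
    nlinarith
  set W := Real.exp (-(N / (800 * s ^ 5))) with hW
  have P0 : (0:ℝ) < 2 ^ N := by positivity
  calc _ ≤ 2 * ((2:ℝ) ^ N * W) + (N + 1) * (2 * (2 ^ N * W)) := by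
        apply add_le_add
        · have : (2:ℝ) ^ N * Real.exp (-((2:ℝ) ^ m / 100)) ≤ 2 ^ N * W := by gcongr
          linarith
        · exact mul_le_mul_of_nonneg_left hfl (by positivity)
    _ = 2 ^ N * ((2 * N + 4) * W) := by ring
    _ ≤ 2 ^ N * (Real.exp y * Real.exp (-(2 * y))) := by gcongr
    _ = _ := by rw [← Real.exp_add]; congr 2; ring

theorem evt : ∃ n₀ : ℕ, ∀ n : ℕ, n₀ ≤ n → 4000 ≤ (n:ℝ) ^ ((1:ℝ) / 8) ∧ 
    Real.log n ≤ (n:ℝ) ^ ((1:ℝ) / 8) / 1000 ∧ 3200 * (n:ℝ) ≤ (Real.sqrt 2) ^ n := by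
  have h1 : ∀ᶠ n : ℕ in Filter.atTop, 4000 ≤ (n:ℝ) ^ ((1:ℝ) / 8) :=
    ((tendsto_rpow_atTop (by norm_num)).comp tendsto_natCast_atTop_atTop).eventually_ge_atTop 4000
  have h2 : ∀ᶠ n : ℕ in Filter.atTop, Real.log n ≤ (n:ℝ) ^ ((1:ℝ) / 8) / 1000 := by
    have := (isLittleO_log_rpow_atTop (r := 1/8) (by norm_num)).bound (c := 1/1000) (by norm_num)
    filter_upwards [tendsto_natCast_atTop_atTop.eventually this] with n hn
    rw [Real.norm_eq_abs, Real.norm_eq_abs, abs_of_nonneg (by positivity : (0:ℝ) ≤ (n:ℝ) ^ ((1:ℝ)/8))] at hn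
    linarith [le_abs_self (Real.log n)]
  have h3 : ∀ᶠ n : ℕ in Filter.atTop, 3200 * (n:ℝ) ≤ (Real.sqrt 2) ^ n := by
    have hr : 1 < Real.sqrt 2 := Real.lt_sqrt_of_sq_lt (by norm_num)
    have := tendsto_pow_const_div_const_pow_of_one_lt 1 hr
    filter_upwards [this.eventually_le_const (by norm_num : (0:ℝ) < 1/3200)] with n hn
    rw [pow_one, div_le_iff₀ (by positivity)] at hn
    linarith
  obtain ⟨n₀, h⟩ := Filter.eventually_atTop.1 (h1.and (h2.and h3))
  exact ⟨n₀, h⟩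
end asym

/-- There are `c > 0` and `n₀` such that for all `n ≥ n₀` and every nonzero `v` of
even Hamming weight, the number of independent sets in `Qₙ ∪ Γ_{F₂ⁿ}(v)` is at
most `2^(2^(n−1) − 2^(n/2 − c·√n))`. -/
theorem count_indep_sets_hypercube_plus_matching :
    ∃ c : ℝ, 0 < c ∧ ∃ n₀ : ℕ, ∀ n : ℕ, n₀ ≤ n →
      ∀ v : V n, v ≠ 0 → Even (hammingNorm v) →
      ({I : Finset (V n) | ∀ x ∈ I, ∀ y ∈ I, ¬ (QCay n v).Adj x y}.ncard : ℝ) ≤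
        2 ^ (((2 ^ (n - 1) : ℕ) : ℝ) - (2 : ℝ) ^ ((n : ℝ) / 2 - c * Real.sqrt n)) := by
  obtain ⟨n₀, h⟩ := evt
  refine ⟨1, one_pos, n₀ + 1, ?_⟩
  intro n hn v hv he
  obtain ⟨m, rfl⟩ : ∃ m, n = m + 1 := ⟨n - 1, by omega⟩
  obtain ⟨h1, h2, h3⟩ := h (m + 1) (by omega)
  have hs8 : ((((m + 1 : ℕ) : ℝ)) ^ ((1:ℝ) / 8)) ^ 8 = ((m + 1 : ℕ) : ℝ) := by
    rw [← Real.rpow_natCast, ← Real.rpow_mul (by positivity)]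
    norm_num
  have hy2 : (Real.sqrt 2 ^ (m + 1)) ^ 2 = 2 ^ (m + 1) := by
    rw [← pow_mul, mul_comm, pow_mul, Real.sq_sqrt (by norm_num)]
  have hfin := final_m m _ hs8 h1 h2 (Real.sqrt 2 ^ (m + 1)) hy2 (by positivity) h3 v hv he
  refine hfin.trans ?_
  have hye : Real.sqrt 2 ^ (m + 1) = (2:ℝ) ^ (((m + 1 : ℕ) : ℝ) / 2) := by
    rw [Real.sqrt_eq_rpow, ← Real.rpow_natCast, ← Real.rpow_mul (by norm_num)]
    congr 1; ring
  set y := Real.sqrt 2 ^ (m + 1) with hy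
  have hy0 : 0 < y := by positivity
  have hle : (2 : ℝ) ^ (((m + 1 : ℕ) : ℝ) / 2 - 1 * Real.sqrt ((m + 1 : ℕ) : ℝ)) ≤ y := by
    rw [hye]
    apply Real.rpow_le_rpow_of_exponent_le (by norm_num)
    linarith [Real.sqrt_nonneg ((m + 1 : ℕ) : ℝ)]
  calc (2:ℝ) ^ (2 ^ m) * Real.exp (-y) ≤ (2:ℝ) ^ (2 ^ m) * (2:ℝ) ^ (-y) := by
        gcongr
        rw [Real.rpow_def_of_pos (by norm_num)]
        apply Real.exp_le_exp.2
        have : Real.log 2 ≤ 1 := by linarith [Real.log_two_lt_d9]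
        nlinarith
    _ = (2:ℝ) ^ (((2 ^ m : ℕ) : ℝ) - y) := by
        rw [sub_eq_add_neg, Real.rpow_add (by norm_num), Real.rpow_natCast]
    _ ≤ _ := by
        apply Real.rpow_le_rpow_of_exponent_le (by norm_num)
        rw [Nat.add_sub_cancel]
        linarith
end

section
/- There exists a constant c > 0 such that for every ε > 0 there exists N₀ with the following property: for every finite abelian group G of order N ≥ N₀, if S is a uniformly random subset of G, then the probability that S can be expressed as a union of at most ⌊c·N / ((log₂ N)² · log₂ log₂ N)⌋ restricted sumsets (i.e., S = (A₁+̂A₁) ∪ … ∪ (A_m+̂A_m) for some m ≤ ⌊c·N / ((log₂ N)² · log₂ log₂ N)⌋ and A₁,…,A_m ⊆ G) is at most ε. -/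
/-- The restricted sumset `A +̂ A = {a + b : a, b ∈ A, a ≠ b}`. -/
def rsumset {G : Type*} [AddCommGroup G] [DecidableEq G] (A : Finset G) : Finset G :=
  ((A ×ˢ A).filter fun p => p.1 ≠ p.2).image fun p => p.1 + p.2

namespace RS

open Finset Pointwise

set_option linter.unusedSectionVars false

lemma pow_le_pow_mul_choose (l : ℕ) : ∀ d : ℕ, l ≤ d → d ^ l ≤ l ^ l * d.choose l := by
  induction l with
  | zero => intro d _; simp
  | succ l ih =>
    intro d hd
    obtain ⟨d, rfl⟩ : ∃ e, d = e + 1 := ⟨d - 1, by omega⟩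
    have h1 := ih d (by omega)
    have h2 := Nat.add_one_mul_choose_eq d l
    have h3 : (d + 1) ^ l ≤ (l + 1) ^ l * d.choose l := by
      rcases Nat.eq_zero_or_pos l with rfl | hl
      · simp
      · have : l ^ l * (d + 1) ^ l ≤ l ^ l * ((l + 1) ^ l * d.choose l) := by
          calc l ^ l * (d + 1) ^ l = (l * (d + 1)) ^ l := by rw [mul_pow]
            _ ≤ ((l + 1) * d) ^ l := by
                apply Nat.pow_le_pow_left
                nlinarith
            _ = (l + 1) ^ l * d ^ l := by rw [mul_pow]
            _ ≤ (l + 1) ^ l * (l ^ l * d.choose l) := Nat.mul_le_mul_left _ h1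
            _ = _ := by ring
        exact Nat.le_of_mul_le_mul_left this (by positivity)
    calc (d + 1) ^ (l + 1) = (d + 1) ^ l * (d + 1) := by ring
      _ ≤ (l + 1) ^ l * d.choose l * (d + 1) := Nat.mul_le_mul_right _ h3
      _ = (l + 1) ^ l * ((d + 1) * d.choose l) := by ring
      _ = _ := by rw [h2]; ring

variable {G : Type} [AddCommGroup G] [DecidableEq G]

def Diss (l : ℕ) (D : Finset G) : Prop :=
  ∀ I ⊆ D, ∀ J ⊆ D, #I ≤ l → #J ≤ l → ∑ x ∈ I, x = ∑ x ∈ J, x → I = J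

def small (l : ℕ) (D : Finset G) : Finset (Finset G) := D.powerset.filter fun I => #I ≤ l

def spanl (l : ℕ) (D : Finset G) : Finset G :=
  (small l D ×ˢ small l D).image fun p => ∑ x ∈ p.1, x - ∑ x ∈ p.2, x

lemma card_small (l : ℕ) (D : Finset G) : #(small l D) ≤ (#D + 1) ^ l := by
  have : small l D ⊆ (range (l + 1)).biUnion fun i => powersetCard i D := by
    intro I hI
    simp only [small, mem_filter, mem_powerset] at hI
    simp only [mem_biUnion, mem_range, mem_powersetCard]
    exact ⟨#I, by omega, hI.1, rfl⟩
  refine (card_le_card this).trans (card_biUnion_le.trans ?_)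
  rw [add_pow]
  apply sum_le_sum
  intro i hi
  rw [card_powersetCard, one_pow, mul_one]
  refine (Nat.choose_le_pow _ _).trans (Nat.le_mul_of_pos_right _ ?_)
  exact Nat.choose_pos (by simpa [Nat.lt_succ_iff] using hi)

lemma card_spanl (l : ℕ) (D : Finset G) : #(spanl l D) ≤ (#D + 1) ^ (2 * l) := by
  refine card_image_le.trans ?_
  rw [card_product, two_mul, pow_add]
  exact Nat.mul_le_mul (card_small l D) (card_small l D)

lemma exists_diss (l : ℕ) (hl : 1 ≤ l) (A : Finset G) :
    ∃ D ⊆ A, Diss l D ∧ A ⊆ spanl l D := by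
  classical
  obtain ⟨D, hD, hmax⟩ := (A.powerset.filter fun D => Diss l D).exists_max_image card
    ⟨∅, by
      rw [mem_filter]
      refine ⟨by simp, fun I hI J hJ _ _ _ => ?_⟩
      rw [subset_empty.1 hI, subset_empty.1 hJ]⟩
  simp only [mem_filter, mem_powerset] at hD hmax
  refine ⟨D, hD.1, hD.2, fun y hy => ?_⟩
  simp only [spanl, mem_image, mem_product, small, mem_filter, mem_powerset, Prod.exists]
  by_cases hyD : y ∈ D
  · exact ⟨{y}, ∅, by simp [hyD, hl], by simp⟩
  have hnd : ¬ Diss l (insert y D) := by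
    intro h
    have := hmax (insert y D) ⟨insert_subset hy hD.1, h⟩
    rw [card_insert_of_notMem hyD] at this
    omega
  unfold Diss at hnd
  push Not at hnd
  obtain ⟨I, hI, J, hJ, hIl, hJl, hs, hne⟩ := hnd
  have key : ∀ I ⊆ insert y D, ∀ J ⊆ insert y D, #I ≤ l → #J ≤ l →
      ∑ x ∈ I, x = ∑ x ∈ J, x → y ∈ I → y ∉ J →
      ∃ a b, ((a ⊆ D ∧ #a ≤ l) ∧ b ⊆ D ∧ #b ≤ l) ∧ ∑ x ∈ a, x - ∑ x ∈ b, x = y := by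
    intro I hI J hJ hIl hJl hs hyI hyJ
    refine ⟨J, I.erase y, ⟨⟨(subset_insert_iff_of_notMem hyJ).1 hJ, hJl⟩,
      subset_insert_iff.1 hI, (card_erase_le).trans hIl⟩, ?_⟩
    rw [← hs, ← add_sum_erase I (fun x => x) hyI]
    simp
  by_cases hyI : y ∈ I <;> by_cases hyJ : y ∈ J
  · exfalso
    apply hne
    have := hD.2 (I.erase y) (subset_insert_iff.1 hI) (J.erase y) (subset_insert_iff.1 hJ)
      (card_erase_le.trans hIl) (card_erase_le.trans hJl) (by
        rw [← add_sum_erase I (fun x => x) hyI, ← add_sum_erase J (fun x => x) hyJ] at hs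
        exact add_left_cancel hs)
    rw [← insert_erase hyI, ← insert_erase hyJ, this]
  · exact key I hI J hJ hIl hJl hs hyI hyJ
  · exact key J hJ I hI hJl hIl hs.symm hyJ hyI
  · exact absurd (hD.2 I ((subset_insert_iff_of_notMem hyI).1 hI) J
      ((subset_insert_iff_of_notMem hyJ).1 hJ) hIl hJl hs) hne

lemma sum_mem_nsmul (D : Finset G) (I : Finset G) (hI : I ⊆ D) :
    ∑ x ∈ I, x ∈ (#I) • D := by
  induction I using Finset.induction_on with
  | empty => simp
  | insert a s ha ih =>
    rw [sum_insert ha, card_insert_of_notMem ha, succ_nsmul']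
    exact add_mem_add (hI (mem_insert_self _ _)) (ih ((subset_insert _ _).trans hI))

lemma diss_card (l : ℕ) (hl : 1 ≤ l) (A D : Finset G) (hA : A.Nonempty) (hAl : #A ≤ 2 ^ l)
    (hD : Diss l D) : #D * #A ≤ 2 * l * #(A + D) := by
  rcases D.eq_empty_or_nonempty with rfl | hDn
  · simp
  rcases le_total (#D) l with h | h
  · have : #A ≤ #(A + D) := card_le_card_add_right hDn
    nlinarith [Nat.mul_le_mul h this]
  have hApos : 0 < #A := hA.card_pos
  have h1 : (#D).choose l ≤ #(l • D) := by
    rw [← card_powersetCard]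
    apply card_le_card_of_injOn (fun I => ∑ x ∈ I, x)
    · intro I hI
      have hI' := mem_powersetCard.1 hI
      have := sum_mem_nsmul D I hI'.1
      rw [hI'.2] at this
      exact this
    · intro I hI J hJ hIJ
      have hI' := mem_powersetCard.1 hI
      have hJ' := mem_powersetCard.1 hJ
      exact hD I hI'.1 J hJ'.1 hI'.2.le hJ'.2.le hIJ
  have h2 := pluennecke_ruzsa_inequality_nsmul_add hA D l
  have h3 := pow_le_pow_mul_choose l _ h
  by_contra hcon
  push Not at hcon
  have h2' : (#(l • D) : ℚ) * #A ^ l ≤ #(A + D) ^ l * #A := by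
    have h2q : (#(l • D) : ℚ) ≤ (#(A + D) / #A : ℚ) ^ l * #A := by exact_mod_cast h2
    have hq : (0 : ℚ) < #A ^ l := by positivity
    rw [div_pow, div_mul_eq_mul_div, le_div_iff₀ hq] at h2q
    exact h2q
  have h4 : #(l • D) * #A ^ l ≤ #(A + D) ^ l * #A := by exact_mod_cast h2'
  have h5 : (#D * #A) ^ l ≤ (2 * l * #(A + D)) ^ l := by
    calc (#D * #A) ^ l = #D ^ l * #A ^ l := mul_pow _ _ _
      _ ≤ l ^ l * (#D).choose l * #A ^ l := Nat.mul_le_mul_right _ h3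
      _ ≤ l ^ l * #(l • D) * #A ^ l := by gcongr
      _ = l ^ l * (#(l • D) * #A ^ l) := by ring
      _ ≤ l ^ l * (#(A + D) ^ l * #A) := by gcongr
      _ ≤ l ^ l * (#(A + D) ^ l * 2 ^ l) := by gcongr
      _ = _ := by rw [mul_pow, mul_pow]; ring
  exact absurd h5 (not_le.2 (Nat.pow_lt_pow_left hcon (by omega)))

section rnd
variable [Fintype G]

lemma count_pi {α : Type} [Fintype α] [DecidableEq α] (R : Finset G) (U : Finset α) :
    #(univ.filter fun F : G → α => ∀ a ∈ R, F a ∈ U) * Fintype.card α ^ #R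
      = #U ^ #R * Fintype.card α ^ Fintype.card G := by
  have h : (univ.filter fun F : G → α => ∀ a ∈ R, F a ∈ U)
      = Fintype.piFinset (fun a => if a ∈ R then U else univ) := by
    ext F
    simp only [mem_filter, mem_univ, true_and, Fintype.mem_piFinset]
    constructor
    · intro h a
      split_ifs with ha
      · exact h a ha
      · exact mem_univ _
    · intro h a ha
      have := h a
      rwa [if_pos ha] at this
  rw [h, Fintype.card_piFinset]
  have h2 : ∀ a : G, #(if a ∈ R then U else (univ : Finset α))
      = if a ∈ R then #U else Fintype.card α := by
    intro a; split_ifs <;> simp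
  simp_rw [h2]
  rw [prod_ite, prod_const, prod_const]
  have h3 : #(univ.filter fun a : G => a ∈ R) = #R := by
    congr 1; ext; simp
  have h4 : #(univ.filter fun a : G => a ∉ R) + #R = Fintype.card G := by
    have := card_filter_add_card_filter_not (s := (univ : Finset G)) (fun a => a ∈ R)
    rw [h3, card_univ] at this
    omega
  rw [h3, mul_assoc, ← pow_add, h4]

lemma five_mul (y r : ℕ) (h : 4 * (y + 1) ≤ r) : 5 * y ^ r ≤ (y + 1) ^ r := by
  rcases Nat.eq_zero_or_pos y with rfl | hy
  · rw [zero_pow (by omega)]; simp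
  have hy' : (0 : ℝ) < y := by exact_mod_cast hy
  have h1 := one_add_mul_le_pow (a := 1 / (y : ℝ)) (by have : 0 < 1 / (y : ℝ) := by positivity
                                                       linarith) r
  have h2 : (5 : ℝ) ≤ 1 + r * (1 / (y : ℝ)) := by
    have : (4 : ℝ) ≤ r * (1 / (y : ℝ)) := by
      rw [mul_one_div, le_div_iff₀ hy']
      have : 4 * y ≤ r := by omega
      exact_mod_cast this
    linarith
  have h3 : (5 : ℝ) * y ^ r ≤ (1 + 1 / (y : ℝ)) ^ r * y ^ r := by
    gcongr; linarith
  rw [← mul_pow] at h3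
  have h4 : (1 + 1 / (y : ℝ)) * y = y + 1 := by field_simp
  rw [h4] at h3
  exact_mod_cast h3

/-- reps of `s` -/
def reps (A : Finset G) (s : G) : Finset G := A.filter fun a => s - a ∈ A ∧ a ≠ s - a

def Bset (g : ℕ) (A : Finset G) (w : (G → Fin (g + 1)) × (G → Fin (g + 1))) : Finset G :=
  A.filter fun a => w.1 a = 0 ∨ w.2 a = 0

lemma mem_rsumset (A : Finset G) (s : G) :
    s ∈ rsumset A ↔ ∃ a ∈ A, ∃ b ∈ A, a ≠ b ∧ a + b = s := by
  simp only [rsumset, mem_image, mem_filter, mem_product, Prod.exists]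
  constructor
  · rintro ⟨a, b, ⟨⟨ha, hb⟩, hab⟩, h⟩
    exact ⟨a, ha, b, hb, hab, h⟩
  · rintro ⟨a, ha, b, hb, hab, h⟩
    exact ⟨a, b, ⟨⟨ha, hb⟩, hab⟩, h⟩

lemma miss_bound (g : ℕ) (A : Finset G) (s : G) (hs : 4 * (g + 1) ^ 2 ≤ #(reps A s)) :
    5 * #(univ.filter fun w => s ∉ rsumset (Bset g A w)) ≤
      Fintype.card ((G → Fin (g + 1)) × (G → Fin (g + 1))) := by
  set U : Finset (Fin (g + 1) × Fin (g + 1)) := univ.erase (0, 0) with hU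
  have hUc : #U = (g + 1) ^ 2 - 1 := by
    rw [hU, card_erase_of_mem (mem_univ _), card_univ, Fintype.card_prod, Fintype.card_fin, sq]
  have hc := count_pi (reps A s) U
  rw [hUc, Fintype.card_prod, Fintype.card_fin, ← sq] at hc
  have hle : #(univ.filter fun w => s ∉ rsumset (Bset g A w)) ≤
      #(univ.filter fun F : G → Fin (g + 1) × Fin (g + 1) => ∀ a ∈ reps A s, F a ∈ U) := by
    apply card_le_card_of_injOn (fun w a => (w.1 a, w.2 (s - a)))
    · intro w hw
      simp only [coe_filter, mem_univ, true_and, Set.mem_ofPred_eq] at hw ⊢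
      intro a ha
      simp only [hU, mem_erase, mem_univ, and_true, ne_eq, Prod.mk.injEq]
      rintro ⟨h1, h2⟩
      apply hw
      rw [mem_rsumset]
      simp only [reps, mem_filter] at ha
      refine ⟨a, by simp [Bset, ha, h1], s - a, by simp [Bset, ha, h2], ha.2.2, by abel⟩
    · intro w _ w' _ h
      have h' := fun a => congrFun h a
      simp only [Prod.mk.injEq] at h'
      ext a : 2
      · exact (h' a).1
      · have := (h' (s - a)).2
        simpa using this
  obtain ⟨y, hy⟩ : ∃ y, (g + 1) ^ 2 = y + 1 := ⟨(g + 1) ^ 2 - 1, by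
    have : 0 < (g + 1) ^ 2 := by positivity
    omega⟩
  rw [hy] at hc hs
  rw [Nat.add_sub_cancel] at hc
  have h5 := five_mul y _ hs
  have hcard : Fintype.card ((G → Fin (g + 1)) × (G → Fin (g + 1)))
      = (y + 1) ^ Fintype.card G := by
    rw [Fintype.card_prod, Fintype.card_fun, Fintype.card_fin, ← hy, ← pow_mul, ← pow_add]
    congr 1; ring
  rw [hcard]
  have hpos : 0 < (y + 1) ^ #(reps A s) := by positivity
  refine Nat.le_of_mul_le_mul_right ?_ hpos
  calc _ ≤ 5 * #(univ.filter fun F : G → Fin (g + 1) × Fin (g + 1) => ∀ a ∈ reps A s, F a ∈ U)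
          * (y + 1) ^ #(reps A s) := by gcongr
    _ = 5 * y ^ #(reps A s) * (y + 1) ^ Fintype.card G := by rw [mul_assoc, hc, mul_assoc]
    _ ≤ (y + 1) ^ #(reps A s) * (y + 1) ^ Fintype.card G := by gcongr
    _ = _ := by ring

lemma one_bound (g : ℕ) (a : G) :
    (g + 1) * #(univ.filter fun w : (G → Fin (g + 1)) × (G → Fin (g + 1)) =>
      w.1 a = 0 ∨ w.2 a = 0) ≤
      2 * Fintype.card ((G → Fin (g + 1)) × (G → Fin (g + 1))) := by
  have hc := count_pi {a} ({0} : Finset (Fin (g + 1)))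
  simp only [mem_singleton, forall_eq, card_singleton, pow_one, one_mul,
    Fintype.card_fin] at hc
  set X := (univ.filter fun F : G → Fin (g + 1) => F a = 0) with hX
  have hsub : (univ.filter fun w : (G → Fin (g + 1)) × (G → Fin (g + 1)) =>
      w.1 a = 0 ∨ w.2 a = 0) ⊆ (X ×ˢ univ) ∪ (univ ×ˢ X) := by
    intro w hw
    simpa [hX] using hw
  have := (card_le_card hsub).trans (card_union_le _ _)
  rw [card_product, card_product, card_univ] at this
  rw [Fintype.card_prod]
  rw [Fintype.card_fun, Fintype.card_fin] at *
  calc _ ≤ (g + 1) * (#X * (g + 1) ^ Fintype.card G + (g + 1) ^ Fintype.card G * #X) := by gcongr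
    _ = 2 * (#X * (g + 1)) * (g + 1) ^ Fintype.card G := by ring
    _ = _ := by rw [hc]; ring

lemma exists_B (g : ℕ) (A Q : Finset G) (hQ : Q.Nonempty) (hA : A.Nonempty)
    (h : ∀ s ∈ Q, 4 * (g + 1) ^ 2 ≤ #(reps A s)) :
    ∃ B ⊆ A, #B * (g + 1) ≤ 4 * #A ∧ #Q ≤ 2 * #(rsumset B) := by
  by_contra hcon
  push Not at hcon
  set Ω := (G → Fin (g + 1)) × (G → Fin (g + 1)) with hΩ
  have hQ0 := hQ.card_pos
  have hA0 := hA.card_pos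
  have hlow : ∀ w : Ω, 4 * #A * #Q <
      #Q * ((g + 1) * #(Bset g A w)) + 8 * #A * #(Q.filter fun s => s ∉ rsumset (Bset g A w)) := by
    intro w
    have h1 := hcon (Bset g A w) (filter_subset _ _)
    rcases lt_or_ge (4 * #A) (#(Bset g A w) * (g + 1)) with h2 | h2
    · nlinarith
    · have h3 := h1 h2
      have h4 : #(Q.filter fun s => s ∈ rsumset (Bset g A w)) ≤ #(rsumset (Bset g A w)) := by
        apply card_le_card
        intro s hs
        exact (mem_filter.1 hs).2
      have h5 := card_filter_add_card_filter_not (s := Q) (fun s => s ∈ rsumset (Bset g A w))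
      have h6 : #Q < 2 * #(Q.filter fun s => s ∉ rsumset (Bset g A w)) := by omega
      have h7 : 4 * #A * #Q < 4 * #A * (2 * #(Q.filter fun s => s ∉ rsumset (Bset g A w))) :=
        Nat.mul_lt_mul_of_pos_left h6 (by omega)
      have h8 := Nat.zero_le (#Q * ((g + 1) * #(Bset g A w)))
      linarith
  have hsum := sum_lt_sum_of_nonempty (s := (univ : Finset Ω)) univ_nonempty (fun w _ => hlow w)
  rw [sum_const, card_univ, smul_eq_mul, sum_add_distrib, ← mul_sum, ← mul_sum, ← mul_sum] at hsum
  have hB : (g + 1) * ∑ w : Ω, #(Bset g A w) ≤ #A * (2 * Fintype.card Ω) := by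
    have := sum_card_bipartiteAbove_eq_sum_card_bipartiteBelow (s := (univ : Finset Ω)) (t := A)
      (fun w a => w.1 a = 0 ∨ w.2 a = 0)
    have e : ∑ w : Ω, #(Bset g A w) =
        ∑ a ∈ A, #(univ.filter fun w : Ω => w.1 a = 0 ∨ w.2 a = 0) := this
    rw [e, mul_sum, ← smul_eq_mul (#A), ← sum_const]
    exact sum_le_sum fun a _ => one_bound g a
  have hM : 5 * ∑ w : Ω, #(Q.filter fun s => s ∉ rsumset (Bset g A w)) ≤ #Q * Fintype.card Ω := by
    have := sum_card_bipartiteAbove_eq_sum_card_bipartiteBelow (s := (univ : Finset Ω)) (t := Q)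
      (fun w s => s ∉ rsumset (Bset g A w))
    have e : ∑ w : Ω, #(Q.filter fun s => s ∉ rsumset (Bset g A w)) =
        ∑ s ∈ Q, #(univ.filter fun w : Ω => s ∉ rsumset (Bset g A w)) := this
    rw [e, mul_sum, ← smul_eq_mul (#Q), ← sum_const]
    exact sum_le_sum fun s hs => miss_bound g A s (h s hs)
  have h1 := Nat.mul_le_mul_left (#Q) hB
  have h2 := Nat.mul_le_mul_left (8 * #A) hM
  have h3 : 0 < #A * #Q * Fintype.card Ω := by
    have : 0 < Fintype.card Ω := Fintype.card_pos
    positivity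
  nlinarith

def bad (T : ℕ) (E : Finset G) (a : G) : Finset G :=
  E.filter fun b => b ≠ a ∧ #(reps E (a + b)) ≤ T

lemma phi_dec (T : ℕ) (E : Finset G) (a : G) (ha : a ∈ E) :
    (∑ s, min (#(reps (E.erase a) s)) T) + #(bad T E a) ≤ ∑ s, min (#(reps E s)) T := by
  have h1 : #(bad T E a) = ∑ s, if s ∈ (bad T E a).image (fun b => a + b) then 1 else 0 := by
    rw [sum_boole, filter_mem_eq_inter, univ_inter, card_image_of_injective _ (add_right_injective a)]
    simp
  rw [h1, ← sum_add_distrib]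
  apply sum_le_sum
  intro s _
  have hsub : reps (E.erase a) s ⊆ (reps E s).erase a := by
    intro x hx
    simp only [reps, mem_filter, mem_erase] at hx ⊢
    tauto
  have hle := card_le_card hsub
  split_ifs with hs
  · obtain ⟨b, hb, rfl⟩ := mem_image.1 hs
    simp only [bad, mem_filter] at hb
    have ha' : a ∈ reps E (a + b) := by
      simp only [reps, mem_filter, ha, true_and, add_sub_cancel_left]
      exact ⟨hb.1, fun h => hb.2.1 h.symm⟩
    have := card_pos.2 ⟨a, ha'⟩
    rw [card_erase_of_mem ha'] at hle
    omega
  · have := card_erase_le (s := reps E s) (a := a)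
    omega

lemma clean (A : Finset G) (T β : ℕ) (hβ : 0 < β) (h : 2 * T * #(A + A) ≤ β * #A) :
    ∃ E ⊆ A, #A ≤ 2 * #E ∧ ∀ a ∈ E, #(bad T E a) ≤ β := by
  obtain ⟨E, hE, hmax⟩ := A.powerset.exists_max_image
    (fun E => (β * #E : ℤ) - (∑ s, min (#(reps E s)) T : ℕ)) ⟨A, mem_powerset_self A⟩
  rw [mem_powerset] at hE
  refine ⟨E, hE, ?_, ?_⟩
  · have h1 := hmax A (mem_powerset_self A)
    have h2 : ∑ s, min (#(reps A s)) T ≤ #(A + A) * T := by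
      rw [← smul_eq_mul, ← sum_const]
      rw [← sum_subset (subset_univ (A + A))]
      · exact sum_le_sum fun s _ => min_le_right _ _
      · intro s _ hs
        have : reps A s = ∅ := by
          apply filter_eq_empty_iff.2
          intro a ha h'
          apply hs
          rw [mem_add]
          exact ⟨a, ha, s - a, h'.1, by abel⟩
        simp [this]
    zify at h2 h ⊢
    have h3 : (0 : ℤ) ≤ ((∑ s, min (#(reps E s)) T : ℕ) : ℤ) := by positivity
    have h4 : (β : ℤ) * #A ≤ β * (2 * #E) := by
      push_cast at *
      nlinarith
    exact le_of_mul_le_mul_left h4 (by exact_mod_cast hβ)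
  · intro a ha
    have h1 := hmax (E.erase a) (mem_powerset.2 ((erase_subset _ _).trans hE))
    have h2 := phi_dec T E a ha
    have h3 := card_erase_add_one ha
    zify at h2 h3 ⊢
    rw [← h3] at h1
    push_cast at *
    linarith

lemma Diss.mono {l : ℕ} {D D' : Finset G} (h : Diss l D) (hs : D' ⊆ D) : Diss l D' :=
  fun I hI J hJ => h I (hI.trans hs) J (hJ.trans hs)

lemma profit (A : Finset G) (L v : ℕ) (hv : 1 ≤ v) (hk : #A = 512 * L * v)
    (hl : 512 * L * v ≤ 2 ^ (2 * v)) (hL : 2 ^ 40 * v ^ 9 ≤ L) :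
    ∃ D B : Finset G, D ⊆ A ∧ B ⊆ A ∧ B ⊆ spanl (2 * v) D ∧
      L * (#D + 3) + 12 * v ^ 2 * #B ≤ #(rsumset B) := by
  have hv9 : 1 ≤ v ^ 9 := Nat.one_le_pow _ _ hv
  have hv2 : 1 ≤ v ^ 2 := Nat.one_le_pow _ _ hv
  have hv6 : 1 ≤ v ^ 6 := Nat.one_le_pow _ _ hv
  have hv3 : 1 ≤ v ^ 3 := Nat.one_le_pow _ _ hv
  have hL1 : 1 ≤ L := by omega
  have hLv : L ≤ L * v := Nat.le_mul_of_pos_right _ hv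
  have hA : A.Nonempty := by
    rw [← card_pos, hk]; positivity
  rcases le_or_gt (64 * v ^ 2 * #A) (#(A + A)) with hc | hc
  · obtain ⟨D, hDA, hD, hspan⟩ := exists_diss (2 * v) (by omega) A
    refine ⟨D, A, hDA, Subset.rfl, hspan, ?_⟩
    have h1 := diss_card (2 * v) (by omega) A D hA (by omega) hD
    have h2 : #(A + D) ≤ #(A + A) := card_le_card (add_subset_add_left hDA)
    have h3 : #(A + A) ≤ #(rsumset A) + #A := by
      have : A + A ⊆ rsumset A ∪ A.image (fun a => a + a) := by
        intro s hs
        obtain ⟨a, ha, b, hb, rfl⟩ := mem_add.1 hs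
        rw [mem_union, mem_rsumset]
        by_cases hab : a = b
        · right; subst hab; exact mem_image_of_mem _ ha
        · left; exact ⟨a, ha, b, hb, hab, rfl⟩
      exact (card_le_card this).trans ((card_union_le _ _).trans
        (Nat.add_le_add_left card_image_le _))
    have h4 : 128 * (L * #D) ≤ #(A + A) := by
      have : (4 * v) * (128 * (L * #D)) ≤ (4 * v) * #(A + A) := by
        calc (4 * v) * (128 * (L * #D)) = #D * #A := by rw [hk]; ring
          _ ≤ 2 * (2 * v) * #(A + D) := h1
          _ ≤ 2 * (2 * v) * #(A + A) := by gcongr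
          _ = _ := by ring
      exact Nat.le_of_mul_le_mul_left this (by omega)
    have h5 : #A ≤ v ^ 2 * #A := Nat.le_mul_of_pos_left _ hv2
    have h6 : L * (#D + 3) + 12 * v ^ 2 * #A = L * #D + 3 * L + 12 * (v ^ 2 * #A) := by ring
    rw [h6]
    have h7 : 64 * v ^ 2 * #A = 64 * (v ^ 2 * #A) := by ring
    have h8 : #A = 512 * (L * v) := by rw [hk]; ring
    omega
  · obtain ⟨g, hg⟩ : ∃ g, g + 1 = 2048 * v ^ 2 := ⟨2048 * v ^ 2 - 1, by omega⟩
    set T := 2 ^ 24 * v ^ 4 with hT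
    set β := 2 ^ 31 * v ^ 6 with hβ
    have hTg : 4 * (g + 1) ^ 2 = T := by rw [hg, hT]; ring
    obtain ⟨E, hEA, hEc, hbad⟩ := clean A T β (by positivity) (by
      calc 2 * T * #(A + A) ≤ 2 * T * (64 * v ^ 2 * #A) := by gcongr
        _ = β * #A := by rw [hT, hβ]; ring)
    have hE : E.Nonempty := by
      rw [← card_pos]
      have := hA.card_pos
      omega
    have hEA' := card_le_card hEA
    obtain ⟨D, hDE, hD, hspan⟩ := exists_diss (2 * v) (by omega) E
    set Q := univ.filter fun s => T < #(reps E s) with hQ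
    -- main size bound
    have hbig : 1024 * v ^ 3 * (β + 1) ≤ #E := by
      have h1 : 1024 * v ^ 3 * (β + 1) ≤ 2 ^ 42 * v ^ 9 := by
        calc 1024 * v ^ 3 * (β + 1) ≤ 1024 * v ^ 3 * (2 ^ 32 * v ^ 6) := by
              gcongr; omega
          _ = _ := by ring
      have h8 : #A = 512 * (L * v) := by rw [hk]; ring
      omega
    have hβE : 1024 * (β + 1) ≤ #E := by
      refine le_trans ?_ hbig
      gcongr
      omega
    have hQE : #E ≤ 2 * #Q := by
      obtain ⟨a, ha⟩ := hE
      have h1 : E ⊆ (bad T E a ∪ {a}) ∪ Q.image (fun s => s - a) := by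
        intro b hb
        simp only [mem_union, mem_singleton, bad, mem_filter, mem_image, hQ, mem_univ, true_and]
        by_cases hba : b = a
        · left; right; exact hba
        by_cases hr : #(reps E (a + b)) ≤ T
        · left; left; exact ⟨hb, hba, hr⟩
        · right; exact ⟨a + b, by omega, by abel⟩
      have h2 := card_le_card h1
      have h3 := card_union_le (bad T E a ∪ {a}) (Q.image (fun s => s - a))
      have h4 := card_union_le (bad T E a) {a}
      have h5 : #(Q.image (fun s => s - a)) ≤ #Q := card_image_le
      have h6 := hbad a ha
      rw [card_singleton] at h4
      omega
    have hQs : #Q ≤ #(A + A) := by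
      apply card_le_card
      intro s hs
      simp only [hQ, mem_filter, mem_univ, true_and] at hs
      obtain ⟨a, ha⟩ := card_pos.1 (lt_of_le_of_lt (Nat.zero_le _) hs)
      simp only [reps, mem_filter] at ha
      exact mem_add.2 ⟨a, hEA ha.1, s - a, hEA ha.2.1, by abel⟩
    have hsum : ∀ D0 ⊆ E, #(E + D0) ≤ #Q + #D0 * (β + 1) := by
      intro D0 hD0
      have h1 : E + D0 ⊆ Q ∪ D0.biUnion fun x => (bad T E x ∪ {x}).image fun b => x + b := by
        intro s hs
        obtain ⟨b, hb, x, hx, rfl⟩ := mem_add.1 hs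
        by_cases hq : b + x ∈ Q
        · exact mem_union_left _ hq
        apply mem_union_right
        rw [mem_biUnion]
        refine ⟨x, hx, mem_image.2 ⟨b, ?_, add_comm _ _⟩⟩
        simp only [hQ, mem_filter, mem_univ, true_and, not_lt] at hq
        simp only [mem_union, mem_singleton, bad, mem_filter]
        by_cases hbx : b = x
        · right; exact hbx
        · left; exact ⟨hb, hbx, by rw [add_comm]; exact hq⟩
      refine (card_le_card h1).trans ((card_union_le _ _).trans (Nat.add_le_add_left ?_ _))
      refine card_biUnion_le.trans ?_
      rw [← smul_eq_mul, ← sum_const]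
      apply sum_le_sum
      intro x hx
      refine card_image_le.trans ((card_union_le _ _).trans ?_)
      rw [card_singleton]
      exact Nat.add_le_add_right (hbad x (hD0 hx)) 1
    have hEl : #E ≤ 2 ^ (2 * v) := by omega
    have hDR : #D < 1024 * v ^ 3 := by
      by_contra hcon
      push Not at hcon
      obtain ⟨D0, hD0, hD0c⟩ := exists_subset_card_eq hcon
      have h1 := diss_card (2 * v) (by omega) E D0 hE hEl (hD.mono hD0)
      have h2 := hsum D0 (hD0.trans hDE)
      rw [hD0c] at h1 h2
      have h3 : #(E + D0) ≤ 129 * v ^ 2 * #E := by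
        have h4 : 64 * v ^ 2 * #A ≤ 64 * v ^ 2 * (2 * #E) := by gcongr
        have h5 : #E ≤ v ^ 2 * #E := Nat.le_mul_of_pos_left _ hv2
        nlinarith
      have h6 : 1024 * v ^ 3 * #E ≤ 516 * v ^ 3 * #E := by
        calc _ ≤ 2 * (2 * v) * #(E + D0) := h1
          _ ≤ 2 * (2 * v) * (129 * v ^ 2 * #E) := by gcongr
          _ = _ := by ring
      have h7 : 0 < v ^ 3 * #E := Nat.mul_pos (by omega) hE.card_pos
      nlinarith
    have hD1 : #D * #E ≤ 12 * v * #Q := by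
      have h1 := diss_card (2 * v) (by omega) E D hE hEl hD
      have h2 := hsum D hDE
      have h3 : #D * (β + 1) ≤ #E := le_trans (Nat.mul_le_mul_right _ hDR.le) hbig
      calc #D * #E ≤ 2 * (2 * v) * #(E + D) := h1
        _ ≤ 2 * (2 * v) * (3 * #Q) := by gcongr; omega
        _ = _ := by ring
    have hD2 : 64 * (L * #D) ≤ 3 * #Q := by
      have : (4 * v) * (64 * (L * #D)) ≤ (4 * v) * (3 * #Q) := by
        have h1 : #D * #A ≤ #D * (2 * #E) := by gcongr
        rw [hk] at h1
        nlinarith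
      exact Nat.le_of_mul_le_mul_left this (by omega)
    have hEpos := hE.card_pos
    obtain ⟨B, hBE, hB1, hB2⟩ := exists_B g E Q (card_pos.1 (by omega)) hE (by
      intro s hs
      simp only [hQ, mem_filter, mem_univ, true_and] at hs
      rw [hTg]; exact hs.le)
    refine ⟨D, B, hDE.trans hEA, hBE.trans hEA, hBE.trans hspan, ?_⟩
    rw [hg] at hB1
    have h6 : L * (#D + 3) + 12 * v ^ 2 * #B = L * #D + 3 * L + 12 * (v ^ 2 * #B) := by ring
    rw [h6]
    have h7 : #B * (2048 * v ^ 2) = 2048 * (v ^ 2 * #B) := by ring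
    have h8 : #A = 512 * (L * v) := by rw [hk]; ring
    omega

lemma card_small_gen {α : Type} [DecidableEq α] (l : ℕ) (D : Finset α) :
    #(D.powerset.filter fun I => #I ≤ l) ≤ (#D + 1) ^ l := by
  have : (D.powerset.filter fun I => #I ≤ l) ⊆
      (range (l + 1)).biUnion fun i => powersetCard i D := by
    intro I hI
    simp only [mem_filter, mem_powerset] at hI
    simp only [mem_biUnion, mem_range, mem_powersetCard]
    exact ⟨#I, by omega, hI.1, rfl⟩
  refine (card_le_card this).trans (card_biUnion_le.trans ?_)
  rw [add_pow]
  apply sum_le_sum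
  intro i hi
  rw [card_powersetCard, one_pow, mul_one]
  refine (Nat.choose_le_pow _ _).trans (Nat.le_mul_of_pos_right _ ?_)
  exact Nat.choose_pos (by simpa [Nat.lt_succ_iff] using hi)

def fam (v d b X : ℕ) : Finset (Finset G) :=
  ((powersetCard d (univ : Finset G)).biUnion fun D => powersetCard b (spanl (2 * v) D)).filter
    fun B => X ≤ #(rsumset B)

lemma card_fam (L v d b X : ℕ) (hv : 1 ≤ v) (hN : Fintype.card G ≤ 2 ^ L) (hd : d ≤ 2 ^ (2 * v)) :
    #(fam (G := G) v d b X) ≤ 2 ^ (L * d + 12 * v ^ 2 * b) := by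
  refine (card_le_card (filter_subset _ _)).trans (card_biUnion_le.trans ?_)
  have h1 : ∀ D ∈ powersetCard d (univ : Finset G),
      #(powersetCard b (spanl (2 * v) D)) ≤ 2 ^ (12 * v ^ 2 * b) := by
    intro D hD
    rw [card_powersetCard, pow_mul]
    refine (Nat.choose_le_pow _ _).trans (Nat.pow_le_pow_left ((card_spanl _ _).trans ?_) _)
    rw [(mem_powersetCard.1 hD).2]
    calc (d + 1) ^ (2 * (2 * v)) ≤ (2 ^ (2 * v + 1)) ^ (2 * (2 * v)) := by
          apply Nat.pow_le_pow_left
          rw [pow_succ]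
          have : 1 ≤ 2 ^ (2 * v) := Nat.one_le_two_pow
          omega
      _ = 2 ^ ((2 * v + 1) * (2 * (2 * v))) := by rw [← pow_mul]
      _ ≤ _ := Nat.pow_le_pow_right (by norm_num) (by nlinarith)
  refine (sum_le_sum h1).trans ?_
  rw [sum_const, smul_eq_mul, card_powersetCard, card_univ, pow_add]
  gcongr
  exact (Nat.choose_le_pow _ _).trans ((Nat.pow_le_pow_left hN _).trans (by rw [← pow_mul]))

lemma big_count (L v : ℕ) (hv : 1 ≤ v) (hN : Fintype.card G ≤ 2 ^ L)
    (hl : 512 * L * v ≤ 2 ^ (2 * v)) (hL : 2 ^ 40 * v ^ 9 ≤ L) (hk : 512 * L * v + 1 ≤ 2 ^ L) :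
    #(univ.filter fun S : Finset G => ∃ A : Finset G, #A = 512 * L * v ∧ rsumset A ⊆ S) * 2 ^ L
      ≤ 2 ^ Fintype.card G := by
  set k := 512 * L * v with hkdef
  set r := (range (k + 1)) ×ˢ (range (k + 1)) with hr
  have hsub : (univ.filter fun S : Finset G => ∃ A : Finset G, #A = k ∧ rsumset A ⊆ S) ⊆
      r.biUnion fun p => (fam v p.1 p.2 (L * (p.1 + 3) + 12 * v ^ 2 * p.2)).biUnion
        fun B => Icc (rsumset B) univ := by
    intro S hS
    obtain ⟨A, hA, hAS⟩ := (mem_filter.1 hS).2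
    obtain ⟨D, B, hDA, hBA, hBD, hX⟩ := profit A L v hv hA hl hL
    simp only [mem_biUnion]
    refine ⟨(#D, #B), ?_, B, ?_, ?_⟩
    · have h1 := card_le_card hDA
      have h2 := card_le_card hBA
      simp only [hr, mem_product, mem_range]
      omega
    · simp only [fam, mem_filter, mem_biUnion, mem_powersetCard]
      exact ⟨⟨D, ⟨subset_univ _, rfl⟩, hBD, trivial⟩, hX⟩
    · rw [mem_Icc]
      refine ⟨?_, subset_univ _⟩
      refine subset_trans ?_ hAS
      intro s hs
      rw [mem_rsumset] at hs ⊢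
      obtain ⟨a, ha, b, hb, h⟩ := hs
      exact ⟨a, hBA ha, b, hBA hb, h⟩
  have h1 : ∀ p ∈ r, #((fam (G := G) v p.1 p.2 (L * (p.1 + 3) + 12 * v ^ 2 * p.2)).biUnion
        fun B => Icc (rsumset B) univ) * 2 ^ (3 * L) ≤ 2 ^ Fintype.card G := by
    intro p hp
    simp only [hr, mem_product, mem_range] at hp
    set X := L * (p.1 + 3) + 12 * v ^ 2 * p.2 with hX
    have h2 : ∀ B ∈ fam (G := G) v p.1 p.2 X,
        #(Icc (rsumset B) univ) * 2 ^ X ≤ 2 ^ Fintype.card G := by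
      intro B hB
      have hXB := (mem_filter.1 hB).2
      rw [card_Icc_finset (subset_univ _), ← pow_add, card_univ]
      apply Nat.pow_le_pow_right (by norm_num)
      have := card_le_univ (rsumset B)
      omega
    have h3 : #((fam (G := G) v p.1 p.2 X).biUnion fun B => Icc (rsumset B) univ) * 2 ^ X
        ≤ #(fam (G := G) v p.1 p.2 X) * 2 ^ Fintype.card G := by
      refine (Nat.mul_le_mul_right _ card_biUnion_le).trans ?_
      rw [sum_mul, ← smul_eq_mul, ← sum_const]
      exact sum_le_sum h2
    have h4 := card_fam (G := G) L v p.1 p.2 X hv hN (by omega)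
    have h5 : X = (L * p.1 + 12 * v ^ 2 * p.2) + 3 * L := by rw [hX]; ring
    have h6 : 0 < 2 ^ (L * p.1 + 12 * v ^ 2 * p.2) := by positivity
    refine Nat.le_of_mul_le_mul_left ?_ h6
    calc _ = #((fam (G := G) v p.1 p.2 X).biUnion fun B => Icc (rsumset B) univ) * 2 ^ X := by
            rw [h5, pow_add]; ring
      _ ≤ _ := h3
      _ ≤ _ := Nat.mul_le_mul_right _ h4
  have h2 : #(univ.filter fun S : Finset G => ∃ A : Finset G, #A = k ∧ rsumset A ⊆ S)
      * 2 ^ (3 * L) ≤ (k + 1) * (k + 1) * 2 ^ Fintype.card G := by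
    refine (Nat.mul_le_mul_right _ ((card_le_card hsub).trans card_biUnion_le)).trans ?_
    rw [sum_mul]
    refine (sum_le_sum h1).trans ?_
    rw [sum_const, smul_eq_mul, hr, card_product, card_range]
  have h3 : (k + 1) * (k + 1) ≤ 2 ^ (2 * L) := by
    rw [two_mul, pow_add]; exact Nat.mul_le_mul hk hk
  have h6 : 0 < 2 ^ (2 * L) := by positivity
  refine Nat.le_of_mul_le_mul_left ?_ h6
  calc _ = #(univ.filter fun S : Finset G => ∃ A : Finset G, #A = k ∧ rsumset A ⊆ S)
          * 2 ^ (3 * L) := by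
        rw [show 3 * L = 2 * L + L by ring, pow_add]; ring
    _ ≤ _ := h2
    _ ≤ _ := Nat.mul_le_mul_right _ h3

lemma small_count (L k m : ℕ) (hN : Fintype.card G ≤ 2 ^ L) :
    #(((((univ : Finset G).powerset.filter fun I => #I ≤ k)).powerset.filter
      fun F => #F ≤ m).image fun F => F.sup rsumset) ≤ 2 ^ (((L + 1) * k + 1) * m) := by
  refine card_image_le.trans ((card_small_gen _ _).trans ?_)
  rw [pow_mul]
  apply Nat.pow_le_pow_left
  have h1 := card_small_gen k (univ : Finset G)
  have h2 : (#(univ : Finset G) + 1) ^ k ≤ 2 ^ ((L + 1) * k) := by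
    rw [pow_mul]
    apply Nat.pow_le_pow_left
    rw [card_univ, pow_succ]
    have : 1 ≤ 2 ^ L := Nat.one_le_two_pow
    omega
  rw [pow_succ]
  have : 1 ≤ 2 ^ ((L + 1) * k) := Nat.one_le_two_pow
  omega

lemma main_count (L v m₀ : ℕ) (hv : 1 ≤ v) (hN : Fintype.card G ≤ 2 ^ L)
    (hl : 512 * L * v ≤ 2 ^ (2 * v)) (hL : 2 ^ 40 * v ^ 9 ≤ L) (hk : 512 * L * v + 1 ≤ 2 ^ L)
    (hm : ((L + 1) * (512 * L * v) + 1) * m₀ + L ≤ Fintype.card G) :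
    {S : Finset G | ∃ m : ℕ, m ≤ m₀ ∧ ∃ A : Fin m → Finset G,
      S = Finset.univ.sup fun i => rsumset (A i)}.ncard * 2 ^ L ≤ 2 * 2 ^ Fintype.card G := by
  set k := 512 * L * v with hkdef
  set P := (univ.filter fun S : Finset G => ∃ A : Finset G, #A = k ∧ rsumset A ⊆ S) with hP
  set R := (((((univ : Finset G).powerset.filter fun I => #I ≤ k)).powerset.filter
      fun F => #F ≤ m₀).image fun F => F.sup rsumset) with hR
  have hsub : {S : Finset G | ∃ m : ℕ, m ≤ m₀ ∧ ∃ A : Fin m → Finset G,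
      S = Finset.univ.sup fun i => rsumset (A i)} ⊆ ((P ∪ R : Finset (Finset G)) : Set _) := by
    rintro S ⟨m, hm, A, rfl⟩
    rw [mem_coe, mem_union]
    by_cases h : ∃ i, k ≤ #(A i)
    · left
      obtain ⟨i, hi⟩ := h
      obtain ⟨A', hA', hc⟩ := exists_subset_card_eq hi
      rw [hP, mem_filter]
      refine ⟨mem_univ _, A', hc, ?_⟩
      have h1 : rsumset (A i) ≤ Finset.univ.sup fun i => rsumset (A i) :=
        le_sup (f := fun i => rsumset (A i)) (mem_univ i)
      refine subset_trans ?_ h1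
      intro s hs
      rw [mem_rsumset] at hs ⊢
      obtain ⟨a, ha, b, hb, h⟩ := hs
      exact ⟨a, hA' ha, b, hA' hb, h⟩
    · right
      push Not at h
      rw [hR, mem_image]
      refine ⟨univ.image A, ?_, ?_⟩
      · rw [mem_filter, mem_powerset]
        refine ⟨?_, card_image_le.trans (by simpa using hm)⟩
        intro I hI
        obtain ⟨i, _, rfl⟩ := mem_image.1 hI
        rw [mem_filter]
        exact ⟨by simp, (h i).le⟩
      · rw [sup_image]; rfl
  have h1 := Set.ncard_le_ncard hsub (Finset.finite_toSet _)
  rw [Set.ncard_coe_finset] at h1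
  have h2 := card_union_le P R
  have h3 := big_count (G := G) L v hv hN hl hL hk
  have h4 := small_count (G := G) L k m₀ hN
  have h5 : #R * 2 ^ L ≤ 2 ^ Fintype.card G := by
    refine (Nat.mul_le_mul_right _ h4).trans ?_
    rw [← pow_add]
    exact Nat.pow_le_pow_right (by norm_num) hm
  calc _ ≤ (#P + #R) * 2 ^ L := Nat.mul_le_mul_right _ (h1.trans h2)
    _ = #P * 2 ^ L + #R * 2 ^ L := by ring
    _ ≤ 2 ^ Fintype.card G + 2 ^ Fintype.card G := Nat.add_le_add h3 h5
    _ = _ := by ring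

end rnd

lemma exists_V0 : ∃ V : ℕ, ∀ v ≥ V, 2 ^ 41 * v ^ 9 ≤ 2 ^ v := by
  have h := tendsto_pow_const_div_const_pow_of_one_lt 9 (r := (2 : ℝ)) (by norm_num)
  have h2 := h.eventually (ge_mem_nhds (show (0 : ℝ) < 1 / 2 ^ 41 by positivity))
  obtain ⟨V, hV⟩ := Filter.eventually_atTop.1 h2
  refine ⟨V, fun v hv => ?_⟩
  have h3 := hV v hv
  rw [div_le_div_iff₀ (by positivity) (by positivity)] at h3
  have : (2 : ℝ) ^ 41 * v ^ 9 ≤ 2 ^ v := by linarith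
  exact_mod_cast this

lemma nat_facts (N L v : ℕ) (hL : L = Nat.clog 2 N) (hv : v = Nat.clog 2 L) (hv1 : 1 ≤ v)
    (hV : 2 ^ 41 * v ^ 9 ≤ 2 ^ v) :
    N ≤ 2 ^ L ∧ 512 * L * v ≤ 2 ^ (2 * v) ∧ 2 ^ 40 * v ^ 9 ≤ L ∧ 512 * L * v + 1 ≤ 2 ^ L ∧
      2 * L ≤ N := by
  have hv9 : v ≤ v ^ 9 := Nat.le_self_pow (by norm_num) v
  have h1 : L ≤ 2 ^ v := by rw [hv]; exact Nat.le_pow_clog (by norm_num) L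
  have hL1 : 1 < L := by
    by_contra h
    have : Nat.clog 2 L = 0 := Nat.clog_of_right_le_one (by omega) 2
    omega
  have hN1 : 1 < N := by
    by_contra h
    have : Nat.clog 2 N = 0 := Nat.clog_of_right_le_one (by omega) 2
    omega
  have h2 : 2 ^ (v - 1) < L := by rw [hv]; exact Nat.pow_pred_clog_lt_self (by norm_num) hL1
  have h3 : 2 ^ (L - 1) < N := by rw [hL]; exact Nat.pow_pred_clog_lt_self (by norm_num) hN1
  have h4 : 2 ^ v = 2 * 2 ^ (v - 1) := by
    rw [← pow_succ']; congr 1; omega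
  have h5 : 512 * L * v ≤ 2 ^ (2 * v) := by
    rw [two_mul, pow_add]
    calc 512 * L * v = L * (512 * v) := by ring
      _ ≤ 2 ^ v * 2 ^ v := Nat.mul_le_mul h1 (by omega)
  have h6 : 2 ^ 40 ≤ L := by omega
  have h7 : ∀ n : ℕ, 40 ≤ n → 4 * n ^ 2 + 1 ≤ 2 ^ (n - 1) := by
    intro n hn
    induction n, hn using Nat.le_induction with
    | base => norm_num
    | succ n hn ih =>
      have : 2 ^ (n + 1 - 1) = 2 * 2 ^ (n - 1) := by
        rw [← pow_succ']; congr 1; omega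
      rw [this]; nlinarith
  have h8 := h7 L (by omega)
  have h9 : 2 ^ (L - 1) ≤ 2 ^ L := Nat.pow_le_pow_right (by norm_num) (by omega)
  refine ⟨by rw [hL]; exact Nat.le_pow_clog (by norm_num) N, h5, by omega, ?_, ?_⟩
  · have : 2 ^ (2 * v) ≤ 4 * L ^ 2 := by
      rw [two_mul, pow_add, h4]; nlinarith
    omega
  · nlinarith

lemma real_facts (N L v m₀ : ℕ) (hL : L = Nat.clog 2 N) (hv : v = Nat.clog 2 L)
    (hL6 : 2 ^ 40 ≤ L) (hLN : 2 * L ≤ N)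
    (hm : m₀ = ⌊(1 / 10000 : ℝ) * (N : ℝ) / ((Real.logb 2 N) ^ 2 *
                  Real.logb 2 (Real.logb 2 N))⌋₊) :
    ((L + 1) * (512 * L * v) + 1) * m₀ + L ≤ N := by
  set n := Real.logb 2 N with hn
  set q := Real.logb 2 n with hq
  have hLn : L = ⌈n⌉₊ := by
    rw [hL, hn]; exact (Real.natCeil_logb_natCast 2 N).symm
  have hvn : v = ⌈Real.logb 2 L⌉₊ := by
    rw [hv]; exact (Real.natCeil_logb_natCast 2 L).symm
  have hL6' : (2 : ℝ) ^ 40 ≤ L := by exact_mod_cast hL6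
  have hn1 : (1000 : ℝ) ≤ n := by
    by_contra h
    have : ⌈n⌉₊ ≤ 1000 := Nat.ceil_le.2 (by push Not at h; exact_mod_cast h.le)
    omega
  have hLle : (L : ℝ) < n + 1 := by rw [hLn]; exact Nat.ceil_lt_add_one (by linarith)
  have hq4 : (4 : ℝ) ≤ q := by
    rw [hq, Real.le_logb_iff_rpow_le (by norm_num) (by linarith)]
    norm_num; linarith
  have hlogL : Real.logb 2 L ≤ q + 1 := by
    have : q + 1 = Real.logb 2 (n * 2) := by
      rw [Real.logb_mul (by linarith) (by norm_num), Real.logb_self_eq_one (by norm_num)]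
    rw [this]
    exact Real.logb_le_logb_of_le (by norm_num) (by linarith) (by linarith)
  have hlogL0 : 0 ≤ Real.logb 2 L := Real.logb_nonneg (by norm_num) (by linarith)
  have hvle : (v : ℝ) < q + 2 := by
    have : (v : ℝ) < Real.logb 2 L + 1 := by rw [hvn]; exact Nat.ceil_lt_add_one hlogL0
    linarith
  have hmle : (m₀ : ℝ) ≤ (1 / 10000 : ℝ) * (N : ℝ) / (n ^ 2 * q) := by
    rw [hm]; exact Nat.floor_le (by positivity)
  have hkey : ((L : ℝ) + 1) * (512 * L * v) + 1 ≤ 5000 * (n ^ 2 * q) := by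
    have a1 : (L : ℝ) + 1 ≤ 1.01 * n := by linarith
    have a2 : (L : ℝ) ≤ 1.01 * n := by linarith
    have a3 : (v : ℝ) ≤ 2 * q := by linarith
    have hL0 : (0 : ℝ) ≤ L := by positivity
    have hv0 : (0 : ℝ) ≤ v := by positivity
    have h1 : ((L : ℝ) + 1) * (512 * L * v) ≤ (1.01 * n) * (512 * (1.01 * n) * (2 * q)) := by
      gcongr
    have h2 : (1 : ℝ) ≤ n ^ 2 * q := by nlinarith
    nlinarith
  have hpos : 0 < n ^ 2 * q := by positivity
  have hfin : (((L : ℝ) + 1) * (512 * L * v) + 1) * m₀ ≤ N / 2 := by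
    calc _ ≤ 5000 * (n ^ 2 * q) * ((1 / 10000 : ℝ) * (N : ℝ) / (n ^ 2 * q)) := by gcongr
      _ = N / 2 := by field_simp; ring
  have hLN' : 2 * (L : ℝ) ≤ N := by exact_mod_cast hLN
  have : (((L + 1) * (512 * L * v) + 1) * m₀ + L : ℝ) ≤ N := by linarith
  exact_mod_cast this

end RS

/-- There is a constant `c > 0` such that for every `ε > 0` there is `N₀` such
that for every finite abelian group `G` of order `N ≥ N₀`, a uniformly random
subset of `G` can be expressed as a union of at most
`⌊c·N / ((log₂ N)²·log₂ log₂ N)⌋` restricted sumsets with probability at most `ε`. -/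
theorem random_set_not_union_of_few_sumsets :
    ∃ c : ℝ, 0 < c ∧ ∀ ε : ℝ, 0 < ε → ∃ N₀ : ℕ,
      ∀ (G : Type) [AddCommGroup G] [Fintype G] [DecidableEq G],
        N₀ ≤ Fintype.card G →
        ({S : Finset G | ∃ m : ℕ,
            m ≤ ⌊c * (Fintype.card G : ℝ) /
                ((Real.logb 2 (Fintype.card G)) ^ 2 *
                  Real.logb 2 (Real.logb 2 (Fintype.card G)))⌋₊ ∧
            ∃ A : Fin m → Finset G,
              S = Finset.univ.sup fun i => rsumset (A i)}.ncard : ℝ) /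
          2 ^ (Fintype.card G) ≤ ε := by

  classical
  obtain ⟨V, hV⟩ := RS.exists_V0
  refine ⟨1 / 10000, by norm_num, fun ε hε => ?_⟩
  obtain ⟨M, hM⟩ := exists_nat_ge (2 / ε)
  refine ⟨max (2 ^ (2 ^ (V + 1))) (M + 1), ?_⟩
  intro G _ _ _ hG
  set N := Fintype.card G with hN
  have hG1 : 2 ^ (2 ^ (V + 1)) ≤ N := le_trans (le_max_left _ _) hG
  have hG2 : M + 1 ≤ N := le_trans (le_max_right _ _) hG
  obtain ⟨L, hL⟩ : ∃ L, L = Nat.clog 2 N := ⟨_, rfl⟩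
  obtain ⟨v, hv⟩ : ∃ v, v = Nat.clog 2 L := ⟨_, rfl⟩
  have hL1 : 2 ^ (V + 1) ≤ L := by
    rw [hL, ← Nat.clog_pow 2 (2 ^ (V + 1)) (by norm_num)]
    exact Nat.clog_mono_right 2 hG1
  have hv1 : V + 1 ≤ v := by
    rw [hv, ← Nat.clog_pow 2 (V + 1) (by norm_num)]
    exact Nat.clog_mono_right 2 hL1
  obtain ⟨f1, f2, f3, f4, f5⟩ := RS.nat_facts N L v hL hv (by omega) (hV v (by omega))
  have hv9 : 1 ≤ v ^ 9 := Nat.one_le_pow _ _ (by omega)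
  have hm := RS.real_facts N L v _ hL hv (by omega) f5 rfl
  have key := RS.main_count (G := G) L v _ (by omega) f1 f2 f3 f4 hm
  have hNpos : (0 : ℝ) < N := by
    have : 0 < N := by omega
    exact_mod_cast this
  have hNε : 2 / ε ≤ N := by
    have : (M : ℝ) ≤ N := by exact_mod_cast (by omega : M ≤ N)
    linarith
  have f1' : (N : ℝ) ≤ 2 ^ L := by exact_mod_cast f1
  rw [div_le_iff₀ hε] at hNε
  rw [div_le_iff₀ (by positivity)]
  have key' := (Nat.cast_le (α := ℝ)).2 key
  push_cast at key'
  have h2 : (2 : ℝ) ≤ 2 ^ L * ε := by nlinarith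
  have h3 : (0 : ℝ) < 2 ^ L := by positivity
  refine le_of_mul_le_mul_right (key'.trans ?_) h3
  have h4 : (0 : ℝ) < 2 ^ Fintype.card G := by positivity
  nlinarith
end
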